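/- arXiv:1510.06964 — 2 statements merged into one kernel-verified Lean document; each statement's English description precedes it below -/
import Mathlib

section
/- Let k ≥ 4 be an integer and let G be a 3-connected k-regular graph of diameter at least 3. Then the set of proper k-colourings of G forms a single Kempe class. -/
open SimpleGraph
open scoped Classical

variable {V : Type*}

/-- A proper `k`-colouring of `G`. -/
def IsProperColoring (G : SimpleGraph V) (k : ℕ) (c : V → Fin k) : Prop :=
  ∀ ⦃u v : V⦄, G.Adj u v → c u ≠ c v

/-- `c'` is obtained from `c` by a single Kempe change: the colours `a` and `b` are
swapped on the connected component (of the subgraph induced by the vertices coloured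
`a` or `b`) containing `v0`, and all other vertices keep their colour. -/

def KempeStep (G : SimpleGraph V) (k : ℕ) (c c' : V → Fin k) : Prop :=
  ∃ a b : Fin k, ∃ v0 : {x : V | c x = a ∨ c x = b},
    ∀ v : V, c' v =
      if h : c v = a ∨ c v = b then
        if (G.induce {x : V | c x = a ∨ c x = b}).Reachable v0 ⟨v, h⟩
          then Equiv.swap a b (c v) else c v
      else c v

/-- Two colourings are Kempe equivalent if one is obtained from the other by a finite
sequence of Kempe changes. -/
def KempeEquiv (G : SimpleGraph V) (k : ℕ) (c c' : V → Fin k) : Prop :=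
  Relation.ReflTransGen (KempeStep G k) c c'

/-- The set of all proper `k`-colourings of `G` forms a single Kempe class. -/
def KempeClass (G : SimpleGraph V) (k : ℕ) : Prop :=
  ∀ c c' : V → Fin k, IsProperColoring G k c → IsProperColoring G k c' →
    KempeEquiv G k c c'

/-- `G` is `d`-degenerate: every nonempty set of vertices contains a vertex with at
most `d` neighbours inside the set. -/
def Degenerate (G : SimpleGraph V) (d : ℕ) : Prop :=
  ∀ S : Set V, S.Nonempty → ∃ v ∈ S, (S ∩ G.neighborSet v).ncard ≤ d

/-- `G` is 3-connected: more than 3 vertices, and deleting any at most 2 vertices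
leaves it connected. -/
def ThreeConnected [Fintype V] (G : SimpleGraph V) : Prop :=
  3 < Fintype.card V ∧ ∀ S : Set V, S.ncard ≤ 2 → (G.induce Sᶜ).Connected


section KempeTools

variable {k : ℕ}

/-- `c` is proper on the vertex set `R`. -/
def POn (G : SimpleGraph V) (c : V → Fin k) (R : Set V) : Prop :=
  ∀ p ∈ R, ∀ q ∈ R, G.Adj p q → c p ≠ c q

/-- Swap colours `a`, `b` on the set `U`. -/
noncomputable def Swp (a b : Fin k) (U : Set V) (c : V → Fin k) : V → Fin k :=
  fun v => if v ∈ U then Equiv.swap a b (c v) else c v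

/-- `U` is a union of `(a,b)`-chains inside `R`. -/
def ClosedIn (G : SimpleGraph V) (c : V → Fin k) (a b : Fin k) (U R : Set V) : Prop :=
  ∀ p ∈ R, ∀ q ∈ R, G.Adj p q → p ∈ U → q ∉ U → (c p = a ∨ c p = b) → (c q = a ∨ c q = b) → False

lemma swap_mem_iff (a b e : Fin k) :
    (Equiv.swap a b e = a ∨ Equiv.swap a b e = b) ↔ (e = a ∨ e = b) := by
  by_cases h1 : e = a
  · subst h1; simp
  · by_cases h2 : e = b
    · subst h2; simp
    · rw [Equiv.swap_apply_of_ne_of_ne h1 h2]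

lemma swp_mem_iff (a b : Fin k) (U : Set V) (c : V → Fin k) (v : V) :
    (Swp a b U c v = a ∨ Swp a b U c v = b) ↔ (c v = a ∨ c v = b) := by
  unfold Swp
  split_ifs
  · exact swap_mem_iff a b _
  · rfl

lemma swp_swp (a b : Fin k) (U : Set V) (c : V → Fin k) : Swp a b U (Swp a b U c) = c := by
  funext v
  unfold Swp
  split_ifs <;> simp

lemma swp_pOn {G : SimpleGraph V} {c : V → Fin k} {a b : Fin k} {U R : Set V}
    (hc : POn G c R) (hU : ClosedIn G c a b U R) : POn G (Swp a b U c) R := by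
  have key : ∀ p ∈ R, ∀ q ∈ R, G.Adj p q → p ∈ U → q ∉ U →
      Equiv.swap a b (c p) ≠ c q := by
    intro p hp q hq hpq hpU hqU heq
    by_cases h : c p = a ∨ c p = b
    · refine hU p hp q hq hpq hpU hqU h ?_
      rw [← heq]; exact (swap_mem_iff a b _).2 h
    · push Not at h
      rw [Equiv.swap_apply_of_ne_of_ne h.1 h.2] at heq
      exact hc p hp q hq hpq heq
  intro p hp q hq hpq
  unfold Swp
  split_ifs with h1 h2 h2
  · intro h; exact hc p hp q hq hpq ((Equiv.swap a b).injective h)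
  · exact key p hp q hq hpq h1 h2
  · exact fun h => key q hq p hp hpq.symm h2 h1 h.symm
  · exact hc p hp q hq hpq

lemma swp_closed {G : SimpleGraph V} {c : V → Fin k} {a b : Fin k} {U R : Set V}
    (hU : ClosedIn G c a b U R) : ClosedIn G (Swp a b U c) a b U R := by
  intro p hp q hq hpq hpU hqU h1 h2
  exact hU p hp q hq hpq hpU hqU ((swp_mem_iff ..).1 h1) ((swp_mem_iff ..).1 h2)

lemma kempe_of_closed_aux [Fintype V] {G : SimpleGraph V} {a b : Fin k} (n : ℕ) :
    ∀ (c : V → Fin k) (U : Set V),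
      (Finset.univ.filter (fun v => v ∈ U ∧ (c v = a ∨ c v = b))).card ≤ n →
      ClosedIn G c a b U Set.univ → KempeEquiv G k c (Swp a b U c) := by
  induction n with
  | zero =>
    intro c U hn hU
    have : Swp a b U c = c := by
      funext v
      unfold Swp
      split_ifs with h
      · by_cases h2 : c v = a ∨ c v = b
        · exfalso
          have hv : v ∈ Finset.univ.filter (fun v => v ∈ U ∧ (c v = a ∨ c v = b)) := by
            simp [h, h2]
          rw [Finset.card_eq_zero.1 (Nat.le_zero.1 hn)] at hv
          simp at hv
        · push Not at h2
          exact Equiv.swap_apply_of_ne_of_ne h2.1 h2.2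
      · rfl
    rw [this]
    exact Relation.ReflTransGen.refl
  | succ n ih =>
    intro c U hn hU
    by_cases hex : ∃ v0, v0 ∈ U ∧ (c v0 = a ∨ c v0 = b)
    · obtain ⟨v0, hv0U, hv0⟩ := hex
      let C : Set V := {v | ∃ h : c v = a ∨ c v = b,
        (G.induce {x : V | c x = a ∨ c x = b}).Reachable ⟨v0, hv0⟩ ⟨v, h⟩}
      have hCU : C ⊆ U := by
        rintro v ⟨h, hr⟩
        rw [SimpleGraph.reachable_iff_reflTransGen] at hr
        have : ∀ z : {x : V | c x = a ∨ c x = b},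
            Relation.ReflTransGen (G.induce {x : V | c x = a ∨ c x = b}).Adj ⟨v0, hv0⟩ z →
            z.1 ∈ U := by
          intro z hz
          induction hz with
          | refl => exact hv0U
          | @tail y z _ hyz ih2 =>
            by_contra hcon
            exact hU y.1 trivial z.1 trivial hyz ih2 hcon y.2 z.2
        exact this _ hr
      have hv0C : v0 ∈ C := ⟨hv0, SimpleGraph.Reachable.refl _⟩
      have hstep : KempeStep G k c (Swp a b C c) := by
        refine ⟨a, b, ⟨v0, hv0⟩, ?_⟩
        intro v
        unfold Swp
        by_cases h : c v = a ∨ c v = b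
        · rw [dif_pos h]
          by_cases h2 : (G.induce {x : V | c x = a ∨ c x = b}).Reachable ⟨v0, hv0⟩ ⟨v, h⟩
          · rw [if_pos h2, if_pos ⟨h, h2⟩]
          · rw [if_neg h2, if_neg (fun h3 => h2 h3.2)]
        · rw [dif_neg h, if_neg (fun h3 => h h3.1)]
      have hcl : ClosedIn G (Swp a b C c) a b (U \ C) Set.univ := by
        intro p _ q _ hpq hp hq h1 h2
        rw [swp_mem_iff] at h1 h2
        by_cases hqU : q ∈ U
        · have hqC : q ∈ C := by
            by_contra h; exact hq ⟨hqU, h⟩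
          obtain ⟨h3, hr⟩ := hqC
          refine hp.2 ⟨h1, hr.trans ?_⟩
          apply SimpleGraph.Adj.reachable
          exact hpq.symm
        · exact hU p trivial q trivial hpq hp.1 hqU h1 h2
      have heq : Swp a b (U \ C) (Swp a b C c) = Swp a b U c := by
        funext v
        unfold Swp
        by_cases hvC : v ∈ C
        · have := hCU hvC
          simp [hvC, this]
        · simp [hvC]
      rw [← heq]
      refine Relation.ReflTransGen.head hstep (ih _ _ ?_ hcl)
      have hlt : (Finset.univ.filter (fun v => v ∈ U \ C ∧
          (Swp a b C c v = a ∨ Swp a b C c v = b))).card <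
          (Finset.univ.filter (fun v => v ∈ U ∧ (c v = a ∨ c v = b))).card := by
        apply Finset.card_lt_card
        refine Finset.ssubset_iff_of_subset ?_ |>.2 ⟨v0, ?_, ?_⟩
        · intro v hv
          simp only [Finset.mem_filter, Finset.mem_univ, true_and] at hv ⊢
          rw [swp_mem_iff] at hv
          exact ⟨hv.1.1, hv.2⟩
        · simp [hv0U, hv0]
        · simp [hv0C]
      have h9 := Nat.le_of_lt_succ (hlt.trans_le hn)
      convert h9
    · push Not at hex
      apply ih _ _ _ hU
      rw [Finset.card_eq_zero.2]
      · omega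
      · ext v
        simp only [Finset.mem_filter, Finset.mem_univ, true_and, Finset.notMem_empty, iff_false]
        rintro ⟨h1, h2⟩
        have := hex v h1
        tauto

lemma kempe_of_closed [Fintype V] {G : SimpleGraph V} {a b : Fin k} {c : V → Fin k} {U : Set V}
    (hU : ClosedIn G c a b U Set.univ) : KempeEquiv G k c (Swp a b U c) :=
  kempe_of_closed_aux _ c U le_rfl hU

/-- A swap on a union of chains in `R`, treating `x` and `y` as identified. -/
def GStep (G : SimpleGraph V) (x y : V) (R : Set V) (c c' : V → Fin k) : Prop :=
  ∃ a b : Fin k, ∃ U : Set V, ClosedIn G c a b U R ∧ (x ∈ U ↔ y ∈ U) ∧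
    ∀ v ∈ R, c' v = Swp a b U c v

lemma POn.congr {G : SimpleGraph V} {c c' : V → Fin k} {R : Set V} (h : POn G c R)
    (heq : ∀ v ∈ R, c' v = c v) : POn G c' R := by
  intro p hp q hq hpq
  rw [heq p hp, heq q hq]
  exact h p hp q hq hpq

lemma GStep.inv {G : SimpleGraph V} {x y : V} {R : Set V} {c c' : V → Fin k}
    (h : GStep G x y R c c') (hx : x ∈ R) (hy : y ∈ R) (hc : POn G c R) (hxy : c x = c y) :
    POn G c' R ∧ c' x = c' y := by
  obtain ⟨a, b, U, hU, hiff, heq⟩ := h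
  refine ⟨(swp_pOn hc hU).congr heq, ?_⟩
  rw [heq x hx, heq y hy]
  unfold Swp
  by_cases h : x ∈ U
  · rw [if_pos h, if_pos (hiff.1 h), hxy]
  · rw [if_neg h, if_neg (fun h2 => h (hiff.2 h2)), hxy]

lemma GEquiv.inv {G : SimpleGraph V} {x y : V} {R : Set V} {c c' : V → Fin k}
    (h : Relation.ReflTransGen (GStep G x y R) c c') (hx : x ∈ R) (hy : y ∈ R)
    (hc : POn G c R) (hxy : c x = c y) :
    POn G c' R ∧ c' x = c' y := by
  induction h with
  | refl => exact ⟨hc, hxy⟩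
  | tail _ h2 ih => exact h2.inv hx hy ih.1 ih.2

/-- Recolouring one vertex is a step. -/
lemma gstep_recolor {G : SimpleGraph V} {x y t : V} {R0 : Set V} {d d' : V → Fin k}
    (hxt : x ≠ t) (hyt : y ≠ t)
    (hd : POn G d (insert t R0)) (hd' : POn G d' (insert t R0)) (heq : ∀ v ∈ R0, d' v = d v)
    (ht : t ∉ R0) :
    GStep G x y (insert t R0) d d' := by
  refine ⟨d t, d' t, {t}, ?_, ?_, ?_⟩
  · intro p hp q hq hpq hpU hqU h1 h2
    have hpt : p = t := hpU
    subst hpt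
    have hq0 : q ∈ R0 := by
      rcases hq with h | h
      · exact absurd h hqU
      · exact h
    rcases h2 with h2 | h2
    · exact hd p hp q hq hpq h2.symm
    · apply hd' p hp q hq hpq
      rw [heq q hq0, h2]
  · simp [hxt, hyt]
  · intro v hv
    unfold Swp
    by_cases hvt : v = t
    · subst hvt; simp
    · have : v ∈ R0 := by
        rcases hv with h | h
        · exact absurd h hvt
        · exact h
      simp [hvt, heq v this]

lemma two_colors1 {a b s p q : Fin k} (hs : s = a ∨ s = b) (hp : p = a ∨ p = b)
    (hq : q = a ∨ q = b) (h1 : s ≠ p) (h2 : s ≠ q) : p = q := by grind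

lemma two_colors2 {a b s p f : Fin k} (hs : s = a ∨ s = b) (hp : p = a ∨ p = b)
    (h1 : s ≠ p) (h2 : f ≠ s) (h3 : f ≠ p) : ¬ (f = a ∨ f = b) := by grind

lemma step_lift {G : SimpleGraph V} {x y t : V} {R0 : Set V} {c c1 d : V → Fin k}
    (ht : t ∉ R0) (hx : x ∈ R0) (hy : y ∈ R0)
    (N : Finset V) (hNk : N.card + 1 ≤ k) (hNR : ∀ q ∈ N, q ∈ R0 ∧ G.Adj t q)
    (hN : ∀ q ∈ R0, G.Adj t q → q ∈ N ∨ (q = y ∧ x ∈ N))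
    (hd : POn G d (insert t R0)) (hxy : d x = d y) (hcd : ∀ v ∈ R0, d v = c v)
    (hs : GStep G x y R0 c c1) :
    ∃ d1, Relation.ReflTransGen (GStep G x y (insert t R0)) d d1 ∧ ∀ v ∈ R0, d1 v = c1 v := by
  obtain ⟨a, b, U, hU, hiff, heq⟩ := hs
  have hxt : x ≠ t := fun h => ht (h ▸ hx)
  have hyt : y ≠ t := fun h => ht (h ▸ hy)
  have hne : ∀ v ∈ R0, v ≠ t := fun v hv h => ht (h ▸ hv)
  -- a coloring in which t is not linked to U
  have case1 : ∀ e : V → Fin k, (∀ v ∈ R0, e v = c v) →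
      (∀ q ∈ R0, G.Adj t q → q ∈ U → (e t = a ∨ e t = b) → (e q = a ∨ e q = b) → False) →
      ∃ d1, Relation.ReflTransGen (GStep G x y (insert t R0)) e d1 ∧ ∀ v ∈ R0, d1 v = c1 v := by
    intro e hec hq
    refine ⟨Swp a b (U \ {t}) e, Relation.ReflTransGen.single ⟨a, b, U \ {t}, ?_, ?_, ?_⟩, ?_⟩
    · intro p hp q' hq' hpq hpU hqU h1 h2
      have hp0 : p ∈ R0 := by
        rcases hp with h | h
        · exact absurd h hpU.2
        · exact h
      rcases hq' with h | h
      · subst h; exact hq p hp0 hpq.symm hpU.1 h2 h1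
      · rw [hec p hp0] at h1
        rw [hec q' h] at h2
        exact hU p hp0 q' h hpq hpU.1 (fun h3 => hqU ⟨h3, hne _ h⟩) h1 h2
    · simp [hxt, hyt, hiff]
    · intro v _; rfl
    · intro v hv
      rw [heq v hv]
      unfold Swp
      simp [hne v hv, hec v hv]
  have case2 : (∀ q ∈ R0, G.Adj t q → q ∉ U → (d t = a ∨ d t = b) → (d q = a ∨ d q = b) → False) →
      ∃ d1, Relation.ReflTransGen (GStep G x y (insert t R0)) d d1 ∧ ∀ v ∈ R0, d1 v = c1 v := by
    intro hq
    refine ⟨Swp a b (U ∪ {t}) d, Relation.ReflTransGen.single ⟨a, b, U ∪ {t}, ?_, ?_, ?_⟩, ?_⟩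
    · intro p hp q' hq' hpq hpU hqU h1 h2
      have hq0 : q' ∈ R0 := by
        rcases hq' with h | h
        · exact absurd (Or.inr h) hqU
        · exact h
      have hq'U : q' ∉ U := fun h => hqU (Or.inl h)
      rcases hp with h | h
      · subst h; exact hq q' hq0 hpq hq'U h1 h2
      · rw [hcd p h] at h1
        rw [hcd q' hq0] at h2
        have hpU' : p ∈ U := by
          rcases hpU with h3 | h3
          · exact h3
          · exact absurd h3 (hne _ h)
        exact hU p h q' hq0 hpq hpU' hq'U h1 h2
    · simp [hxt, hyt, hiff]
    · intro v _; rfl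
    · intro v hv
      rw [heq v hv]
      unfold Swp
      simp [hne v hv, hcd v hv]
  by_cases h1 : ∃ p ∈ R0, G.Adj t p ∧ p ∈ U ∧ (d t = a ∨ d t = b) ∧ (d p = a ∨ d p = b)
  · by_cases h2 : ∃ q ∈ R0, G.Adj t q ∧ q ∉ U ∧ (d t = a ∨ d t = b) ∧ (d q = a ∨ d q = b)
    · obtain ⟨p, hp, htp, hpU, hta, hpa⟩ := h1
      obtain ⟨q, hq, htq, hqU, -, hqa⟩ := h2
      have hdp : d t ≠ d p := hd t (Or.inl rfl) p (Or.inr hp) htp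
      have hdq : d t ≠ d q := hd t (Or.inl rfl) q (Or.inr hq) htq
      have hpq : d p = d q :=
         two_colors1 hta hpa hqa hdp hdq
      obtain ⟨p', hp'N, hp'd, hp'U⟩ : ∃ p' ∈ N, d p' = d p ∧ p' ∈ U := by
        rcases hN p hp htp with h | ⟨h, h'⟩
        · exact ⟨p, h, rfl, hpU⟩
        · exact ⟨x, h', by rw [hxy, h], hiff.2 (h ▸ hpU)⟩
      obtain ⟨q', hq'N, hq'd, hq'U⟩ : ∃ q' ∈ N, d q' = d p ∧ q' ∉ U := by
        rcases hN q hq htq with h | ⟨h, h'⟩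
        · exact ⟨q, h, hpq.symm, hqU⟩
        · exact ⟨x, h', by rw [hxy, ← h, hpq], fun h3 => hqU (h ▸ hiff.1 h3)⟩
      have hpq' : p' ≠ q' := fun h => hq'U (h ▸ hp'U)
      have himg : N.image d = (N.erase q').image d := by
        ext z
        simp only [Finset.mem_image, Finset.mem_erase]
        constructor
        · rintro ⟨v, hv, rfl⟩
          by_cases hvq : v = q'
          · exact ⟨p', ⟨hpq', hp'N⟩, by rw [hvq, hp'd, hq'd]⟩
          · exact ⟨v, ⟨hvq, hv⟩, rfl⟩
        · rintro ⟨v, hv, rfl⟩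
          exact ⟨v, hv.2, rfl⟩
      have hcard : (insert (d t) (N.image d)).card < k := by
        have h3 := Finset.card_insert_le (d t) (N.image d)
        have h4 : (N.image d).card ≤ (N.erase q').card := by
          rw [himg]; exact Finset.card_image_le
        have h5 := Finset.card_erase_of_mem hq'N
        have h6 : 0 < N.card := Finset.card_pos.2 ⟨q', hq'N⟩
        omega
      obtain ⟨f, hf⟩ : ∃ f : Fin k, f ∉ insert (d t) (N.image d) := by
        by_contra hcon
        push Not at hcon
        have : insert (d t) (N.image d) = Finset.univ := by
          ext z; simp only [Finset.mem_univ, iff_true]; exact hcon z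
        rw [this] at hcard
        simp at hcard
      simp only [Finset.mem_insert, Finset.mem_image, not_or, not_exists, not_and] at hf
      have hfR : ∀ q ∈ R0, G.Adj t q → d q ≠ f := by
        intro q hq htq
        rcases hN q hq htq with h | ⟨h, h'⟩
        · exact hf.2 q h
        · rw [h, ← hxy]; exact hf.2 x h'
      let e : V → Fin k := Function.update d t f
      have hed : ∀ v ∈ R0, e v = d v := fun v hv => Function.update_of_ne (hne v hv) _ _
      have het : e t = f := Function.update_self ..
      have heP : POn G e (insert t R0) := by
        intro r hr s hs hrs
        rcases hr with rfl | hr <;> rcases hs with rfl | hs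
        · exact absurd hrs (G.loopless.irrefl _)
        · rw [het, hed s hs]; exact (hfR s hs hrs).symm
        · rw [het, hed r hr]; exact hfR r hr hrs.symm
        · rw [hed s hs, hed r hr]; exact hd r (Or.inr hr) s (Or.inr hs) hrs
      have hfa : ¬ (f = a ∨ f = b) := by
        have e1 : f ≠ d t := hf.1
        have e2 : f ≠ d p := (hfR p hp htp).symm
        exact two_colors2 hta hpa hdp e1 e2
      obtain ⟨d1, hd1, hd1'⟩ := case1 e (fun v hv => (hed v hv).trans (hcd v hv))
        (fun q _ _ _ h _ => hfa (het ▸ h))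
      exact ⟨d1, Relation.ReflTransGen.head (gstep_recolor hxt hyt hd heP hed ht) hd1, hd1'⟩
    · push Not at h2
      apply case2
      intro q hq htq hqU h3 h4
      have := h2 q hq htq hqU h3
      tauto
  · push Not at h1
    apply case1 d hcd
    intro q hq htq hqU h3 h4
    have := h1 q hq htq hqU h3
    tauto

lemma equiv_extend {G : SimpleGraph V} {x y t : V} {R0 : Set V}
    (ht : t ∉ R0) (hx : x ∈ R0) (hy : y ∈ R0)
    (N : Finset V) (hNk : N.card + 1 ≤ k) (hNR : ∀ q ∈ N, q ∈ R0 ∧ G.Adj t q)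
    (hN : ∀ q ∈ R0, G.Adj t q → q ∈ N ∨ (q = y ∧ x ∈ N))
    (h0 : ∀ c c' : V → Fin k, POn G c R0 → POn G c' R0 → c x = c y → c' x = c' y →
      Relation.ReflTransGen (GStep G x y R0) c c') :
    ∀ c c' : V → Fin k, POn G c (insert t R0) → POn G c' (insert t R0) → c x = c y →
      c' x = c' y → Relation.ReflTransGen (GStep G x y (insert t R0)) c c' := by
  intro c c' hc hc' hxy hxy'
  have mono : ∀ e : V → Fin k, POn G e (insert t R0) → POn G e R0 :=
    fun e he p hp q hq => he p (Or.inr hp) q (Or.inr hq)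
  have h1 := h0 c c' (mono c hc) (mono c' hc') hxy hxy'
  have hxi : x ∈ insert t R0 := Or.inr hx
  have hyi : y ∈ insert t R0 := Or.inr hy
  have h2 : ∃ d1, Relation.ReflTransGen (GStep G x y (insert t R0)) c d1 ∧
      ∀ v ∈ R0, d1 v = c' v := by
    clear hxy' hc'
    induction h1 with
    | refl => exact ⟨c, Relation.ReflTransGen.refl, fun _ _ => rfl⟩
    | tail _ hs ih =>
      obtain ⟨d, hd, hdc⟩ := ih
      have hinv := GEquiv.inv hd hxi hyi hc hxy
      obtain ⟨d1, hd1, hd1c⟩ := step_lift ht hx hy N hNk hNR hN hinv.1 hinv.2 hdc hs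
      exact ⟨d1, hd.trans hd1, hd1c⟩
  obtain ⟨d1, hd1, hd1c⟩ := h2
  have hinv := GEquiv.inv hd1 hxi hyi hc hxy
  exact hd1.tail (gstep_recolor (fun h => ht (h ▸ hx)) (fun h => ht (h ▸ hy)) hinv.1 hc'
    (fun v hv => (hd1c v hv).symm) ht)

end KempeTools

/-- Three-connectivity in the form used: no nonempty set with at most two outer neighbours
and a vertex beyond. -/
def NoTwoCut (G : SimpleGraph V) : Prop :=
  ∀ (T : Finset V) (p q t0 z0 : V), t0 ∈ T → p ∉ T → q ∉ T → z0 ∉ T → z0 ≠ p → z0 ≠ q →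
    (∀ t ∈ T, ∀ z, G.Adj t z → z ∈ T ∨ z = p ∨ z = q) → False

lemma noTwoCut_of_threeConnected [Fintype V] {G : SimpleGraph V} (h : ThreeConnected G) :
    NoTwoCut G := by
  intro T p q t0 z0 ht0 hp hq hz hzp hzq hT
  have hc := h.2 {p, q} (by
    have := Set.ncard_insert_le p {q}
    simpa using this)
  have ht0' : t0 ∈ ({p, q} : Set V)ᶜ := by
    rintro (rfl | h)
    · exact hp ht0
    · rw [Set.mem_singleton_iff] at h; subst h; exact hq ht0
  have hz0' : z0 ∈ ({p, q} : Set V)ᶜ := by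
    rintro (h | h)
    · exact hzp h
    · exact hzq h
  have hr := hc.preconnected ⟨t0, ht0'⟩ ⟨z0, hz0'⟩
  rw [SimpleGraph.reachable_iff_reflTransGen] at hr
  have : ∀ z : ↥(({p, q} : Set V)ᶜ),
      Relation.ReflTransGen (G.induce ({p, q} : Set V)ᶜ).Adj ⟨t0, ht0'⟩ z → z.1 ∈ T := by
    intro z hz
    induction hz with
    | refl => exact ht0
    | @tail y z _ hyz ih =>
      rcases hT y.1 ih z.1 hyz with h | h | h
      · exact h
      · exact absurd (Or.inl h) z.2
      · exact absurd (Or.inr h) z.2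
  exact hz (this _ hr)

/-- nonadjacent distinct vertices with a common neighbour -/
def Elig (G : SimpleGraph V) (x y : V) : Prop :=
  x ≠ y ∧ ¬ G.Adj x y ∧ ∃ w, G.Adj w x ∧ G.Adj w y

/-- neighbours of `v` as a finset -/
noncomputable def nb [Fintype V] (G : SimpleGraph V) (v : V) : Finset V :=
  Finset.univ.filter (fun z => G.Adj v z)

lemma mem_nb [Fintype V] {G : SimpleGraph V} {v z : V} : z ∈ nb G v ↔ G.Adj v z := by
  simp [nb]

lemma mono_equiv_aux [Fintype V] {k : ℕ} {G : SimpleGraph V} (hreg : ∀ v, (nb G v).card = k)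
    (h2 : NoTwoCut G) {x y : V} (he : Elig G x y) (n : ℕ) :
    ∀ T : Finset V, T.card = n → x ∉ T → y ∉ T →
    ∀ c c' : V → Fin k, POn G c ({x, y} ∪ (T : Set V)) → POn G c' ({x, y} ∪ (T : Set V)) →
      c x = c y → c' x = c' y →
      Relation.ReflTransGen (GStep G x y ({x, y} ∪ (T : Set V))) c c' := by
  induction n with
  | zero =>
    intro T hT _ _ c c' _ _ hxy hxy'
    rw [Finset.card_eq_zero] at hT
    subst hT
    refine Relation.ReflTransGen.single ⟨c x, c' x, Set.univ, ?_, by simp, ?_⟩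
    · intro p _ q _ _ _ h; exact absurd trivial h
    · intro v hv
      simp only [Finset.coe_empty, Set.union_empty] at hv
      rcases hv with rfl | hv
      · simp [Swp]
      · rw [Set.mem_singleton_iff] at hv
        subst hv
        simp [Swp, ← hxy, ← hxy']
  | succ n ih =>
    intro T hT hxT hyT
    obtain ⟨hne, hnadj, w, hwx, hwy⟩ := he
    have hex : ∃ t ∈ T, (∃ z, G.Adj t z ∧ z ∉ T ∧ z ≠ x ∧ z ≠ y) ∨ (G.Adj t x ∧ G.Adj t y) := by
      by_contra hcon
      push Not at hcon
      obtain ⟨t0, ht0⟩ := Finset.card_pos.1 (by omega : 0 < T.card)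
      have hwT : w ∉ T := fun h => (hcon w h).2 hwx hwy
      refine h2 T x y t0 w ht0 hxT hyT hwT hwx.ne hwy.ne ?_
      intro t ht z htz
      by_contra h
      push Not at h
      exact h.2.2 ((hcon t ht).1 z htz h.1 h.2.1)
    obtain ⟨t, ht, hcase⟩ := hex
    have htx : t ≠ x := fun h => hxT (h ▸ ht)
    have hty : t ≠ y := fun h => hyT (h ▸ ht)
    have hR : ({x, y} ∪ (T : Set V)) = insert t ({x, y} ∪ ((T.erase t : Finset V) : Set V)) := by
      ext v
      simp only [Set.mem_union, Set.mem_insert_iff, Set.mem_singleton_iff, Finset.mem_coe,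
        Finset.mem_erase]
      by_cases hv : v = t
      · subst hv; simp [ht]
      · simp [hv]
    rw [hR]
    have hih := ih (T.erase t) (by rw [Finset.card_erase_of_mem ht]; omega)
      (fun h => hxT (Finset.mem_of_mem_erase h)) (fun h => hyT (Finset.mem_of_mem_erase h))
    have htR : t ∉ ({x, y} ∪ ((T.erase t : Finset V) : Set V)) := by
      simp [htx, hty]
    set R0 : Set V := {x, y} ∪ ((T.erase t : Finset V) : Set V) with hR0
    have hxR : x ∈ R0 := by simp [hR0]
    have hyR : y ∈ R0 := by simp [hR0]
    rcases hcase with ⟨z, htz, hzT, hzx, hzy⟩ | ⟨h3, h4⟩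
    · refine equiv_extend htR hxR hyR ((nb G t).filter (fun q => q ∈ R0)) ?_ ?_ ?_ hih
      · rw [← hreg t]
        apply Finset.card_lt_card
        refine Finset.ssubset_iff_of_subset (Finset.filter_subset _ _) |>.2 ⟨z, mem_nb.2 htz, ?_⟩
        simp [hR0, hzT, hzx, hzy]
      · intro q hq
        simp only [Finset.mem_filter, mem_nb] at hq
        exact ⟨hq.2, hq.1⟩
      · intro q hq htq
        left
        simp only [Finset.mem_filter, mem_nb]
        exact ⟨htq, hq⟩
    · refine equiv_extend htR hxR hyR (((nb G t).filter (fun q => q ∈ R0)).erase y) ?_ ?_ ?_ hih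
      · rw [← hreg t]
        apply Finset.card_lt_card
        refine Finset.ssubset_iff_of_subset ?_ |>.2 ⟨y, mem_nb.2 h4, by simp⟩
        exact (Finset.erase_subset _ _).trans (Finset.filter_subset _ _)
      · intro q hq
        simp only [Finset.mem_erase, Finset.mem_filter, mem_nb] at hq
        exact ⟨hq.2.2, hq.2.1⟩
      · intro q hq htq
        simp only [Finset.mem_erase, Finset.mem_filter, mem_nb]
        by_cases hqy : q = y
        · right; exact ⟨hqy, hne, h3, hxR⟩
        · left; exact ⟨hqy, htq, hq⟩

lemma mono_equiv [Fintype V] {k : ℕ} {G : SimpleGraph V} (hreg : ∀ v, (nb G v).card = k)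
    (h2 : NoTwoCut G) {x y : V} (he : Elig G x y) (c c' : V → Fin k)
    (hc : IsProperColoring G k c) (hc' : IsProperColoring G k c')
    (hxy : c x = c y) (hxy' : c' x = c' y) : KempeEquiv G k c c' := by
  have h := mono_equiv_aux hreg h2 he _ (Finset.univ \ {x, y}) rfl (by simp) (by simp) c c'
    (fun p _ q _ h => hc h) (fun p _ q _ h => hc' h) hxy hxy'
  have hu : ({x, y} ∪ ((Finset.univ \ {x, y} : Finset V) : Set V)) = Set.univ := by
    ext v; simp
  rw [hu] at h
  clear hc hc' hxy hxy'
  induction h with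
  | refl => exact Relation.ReflTransGen.refl
  | tail _ hs ih =>
    obtain ⟨a, b, U, hU, -, heq⟩ := hs
    refine ih.trans ?_
    have : _ = Swp a b U _ := funext (fun v => heq v trivial)
    rw [this]
    exact kempe_of_closed hU

section Greedy

variable {k : ℕ}

lemma greedy [Fintype V] {G : SimpleGraph V} (S : Finset V) (f0 : V → Fin k)
    (hf0 : POn G f0 (S : Set V)) (n : ℕ) : ∀ T : Finset V, T.card = n → (∀ t ∈ T, t ∉ S) →
    (∃ f : V → Fin k, (∀ s ∈ S, f s = f0 s) ∧ POn G f ((S ∪ T : Finset V) : Set V)) ∨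
    ∃ T' ⊆ T, T'.Nonempty ∧
      ∀ t ∈ T', k ≤ (nb G t ∩ T').card + ((nb G t ∩ S).image f0).card := by
  induction n with
  | zero =>
    intro T hT _
    rw [Finset.card_eq_zero] at hT
    subst hT
    left
    exact ⟨f0, fun _ _ => rfl, by simpa using hf0⟩
  | succ n ih =>
    intro T hT hTS
    by_cases h : ∃ t ∈ T, (nb G t ∩ T).card + ((nb G t ∩ S).image f0).card < k
    · obtain ⟨t, ht, hlt⟩ := h
      rcases ih (T.erase t) (by rw [Finset.card_erase_of_mem ht]; omega)
        (fun s hs => hTS s (Finset.mem_of_mem_erase hs)) with ⟨f, hfS, hf⟩ | ⟨T', hT', hne, hall⟩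
      · left
        have hcard : ((nb G t ∩ T).image f ∪ (nb G t ∩ S).image f0).card < k := by
          have h1 := Finset.card_union_le ((nb G t ∩ T).image f) ((nb G t ∩ S).image f0)
          have h2 : ((nb G t ∩ T).image f).card ≤ _ := Finset.card_image_le
          omega
        obtain ⟨m, hm⟩ : ∃ m : Fin k, m ∉ (nb G t ∩ T).image f ∪ (nb G t ∩ S).image f0 := by
          by_contra hcon
          push Not at hcon
          rw [Finset.eq_univ_iff_forall.2 hcon] at hcard
          simp at hcard
        simp only [Finset.mem_union, Finset.mem_image, Finset.mem_inter, mem_nb, not_or,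
          not_exists, not_and, and_imp] at hm
        have htS := hTS t ht
        refine ⟨Function.update f t m, ?_, ?_⟩
        · intro s hs
          have : s ≠ t := fun h => htS (h ▸ hs)
          rw [Function.update_of_ne this]
          exact hfS s hs
        · have key : ∀ q ∈ S ∪ T, q ≠ t → G.Adj t q → m ≠ f q := by
            intro q hq hqt htq
            rcases Finset.mem_union.1 hq with h | h
            · rw [hfS q h]; exact fun h' => hm.2 q htq h h'.symm
            · exact fun h' => hm.1 q htq h h'.symm
          intro p hp q hq hpq
          rw [Finset.mem_coe] at hp hq
          by_cases hpt : p = t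
          · subst hpt
            rw [Function.update_self, Function.update_of_ne hpq.ne']
            exact key q hq hpq.ne' hpq
          · by_cases hqt : q = t
            · subst hqt
              rw [Function.update_self, Function.update_of_ne hpq.ne]
              exact (key p hp hpq.ne hpq.symm).symm
            · rw [Function.update_of_ne hpt, Function.update_of_ne hqt]
              apply hf p _ q _ hpq
              · simp only [Finset.mem_coe, Finset.mem_union, Finset.mem_erase] at hp ⊢; tauto
              · simp only [Finset.mem_coe, Finset.mem_union, Finset.mem_erase] at hq ⊢; tauto
      · right
        exact ⟨T', hT'.trans (Finset.erase_subset _ _), hne, hall⟩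
    · right
      push Not at h
      exact ⟨T, subset_rfl, Finset.card_pos.1 (by omega), h⟩

lemma gc [Fintype V] {G : SimpleGraph V} (hreg : ∀ v, (nb G v).card = k)
    (S T : Finset V) (f0 : V → Fin k)
    (hf0 : POn G f0 (S : Set V)) (hTS : ∀ t ∈ T, t ∉ S) :
    (∃ f : V → Fin k, (∀ s ∈ S, f s = f0 s) ∧ POn G f ((S ∪ T : Finset V) : Set V)) ∨
    ∃ T' ⊆ T, T'.Nonempty ∧
      ∀ t ∈ T', (∀ z, G.Adj t z → z ∈ T' ∨ z ∈ S) ∧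
        ∀ z ∈ S, ∀ z' ∈ S, G.Adj t z → G.Adj t z' → f0 z = f0 z' → z = z' := by
  rcases greedy S f0 hf0 _ T rfl hTS with h | ⟨T', hT', hne, hall⟩
  · exact Or.inl h
  · right
    refine ⟨T', hT', hne, ?_⟩
    intro t ht
    have h1 := hall t ht
    have h2 : ((nb G t ∩ S).image f0).card ≤ (nb G t ∩ S).card := Finset.card_image_le
    have hdisj : Disjoint (nb G t ∩ T') (nb G t ∩ S) := by
      rw [Finset.disjoint_left]
      intro z hz hz'
      exact hTS z (hT' (Finset.mem_inter.1 hz).2) (Finset.mem_inter.1 hz').2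
    have hsub : (nb G t ∩ T') ∪ (nb G t ∩ S) ⊆ nb G t :=
      Finset.union_subset Finset.inter_subset_left Finset.inter_subset_left
    have h3 := Finset.card_union_of_disjoint hdisj
    have h4 := Finset.card_le_card hsub
    have h5 := hreg t
    have heq := Finset.eq_of_subset_of_card_le hsub (by omega)
    constructor
    · intro z hz
      have : z ∈ (nb G t ∩ T') ∪ (nb G t ∩ S) := by rw [heq]; exact mem_nb.2 hz
      simp only [Finset.mem_union, Finset.mem_inter] at this
      tauto
    · have hinj : Set.InjOn f0 (nb G t ∩ S : Finset V) := by
        apply Finset.card_image_iff.1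
        omega
      intro z hz z' hz' htz htz' hzz
      exact hinj (by simp [mem_nb, hz, htz]) (by simp [mem_nb, hz', htz']) hzz

end Greedy

/-- Working hypotheses: `X` is a union of Kempe classes, constant on each set of colourings
that are monochromatic on a given eligible pair. -/
structure Ctx [Fintype V] (G : SimpleGraph V) (k : ℕ) (X : (V → Fin k) → Prop) : Prop where
  hk : 4 ≤ k
  reg : ∀ v, (nb G v).card = k
  tc : NoTwoCut G
  H1 : ∀ x y c c', Elig G x y → IsProperColoring G k c → IsProperColoring G k c' →
    c x = c y → c' x = c' y → X c → X c'
  H2 : ∀ c a b U, IsProperColoring G k c → ClosedIn G c a b U Set.univ →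
    (X c ↔ X (Swp a b U c))

section Struct

variable [Fintype V] {k : ℕ} {G : SimpleGraph V} {X : (V → Fin k) → Prop}

lemma Ctx.neg (h : Ctx G k X) : Ctx G k (fun c => ¬ X c) where
  hk := h.hk
  reg := h.reg
  tc := h.tc
  H1 := fun x y c c' he hc hc' hxy hxy' hX hX' => hX (h.H1 x y c' c he hc' hc hxy' hxy hX')
  H2 := fun c a b U hc hU => not_congr (h.H2 c a b U hc hU)

lemma Elig.symm {x y : V} (h : Elig G x y) : Elig G y x := by
  obtain ⟨h1, h2, w, h3, h4⟩ := h
  exact ⟨h1.symm, fun h => h2 h.symm, w, h4, h3⟩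

lemma elig_col (h : Ctx G k X) {x y : V} (he : Elig G x y) :
    ∃ c, IsProperColoring G k c ∧ c x = c y := by
  obtain ⟨hne, hna, w, hwx, hwy⟩ := he
  have h0 : 0 < k := by have := h.hk; omega
  have hP : POn G (fun _ : V => (⟨0, h0⟩ : Fin k)) (({x, y} : Finset V) : Set V) := by
    intro p hp q hq hpq
    exfalso
    simp only [Finset.coe_insert, Finset.coe_singleton, Set.mem_insert_iff,
      Set.mem_singleton_iff] at hp hq
    rcases hp with rfl | rfl <;> rcases hq with rfl | rfl
    · exact hpq.ne rfl
    · exact hna hpq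
    · exact hna hpq.symm
    · exact hpq.ne rfl
  rcases gc h.reg {x, y} (Finset.univ \ {x, y}) _ hP (by simp) with ⟨f, hf, hf2⟩ |
    ⟨T', hT', ⟨t0, ht0⟩, hall⟩
  · refine ⟨f, ?_, by rw [hf x (by simp), hf y (by simp)]⟩
    intro p q hpq
    exact hf2 p (by simp) q (by simp) hpq
  · exfalso
    have hx : x ∉ T' := fun h => by have := hT' h; simp at this
    have hy : y ∉ T' := fun h => by have := hT' h; simp at this
    have hw : w ∉ T' := fun h => hne ((hall w h).2 x (by simp) y (by simp) hwx hwy rfl)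
    refine h.tc T' x y t0 w ht0 hx hy hw hwx.ne hwy.ne ?_
    intro t ht z htz
    have := (hall t ht).1 z htz
    simpa using this

/-- A closed set for the removal of `a,b,c,d`. -/
structure Cl (G : SimpleGraph V) (a b c d : V) (T : Finset V) : Prop where
  ha : a ∉ T
  hb : b ∉ T
  hc : c ∉ T
  hd : d ∉ T
  cl : ∀ t ∈ T, ∀ z, G.Adj t z → z ∈ T ∨ z = a ∨ z = b ∨ z = c ∨ z = d

/-- Closed set without slack. -/
structure NS (G : SimpleGraph V) (a b c d : V) (T : Finset V) : Prop extends Cl G a b c d T where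
  ne : T.Nonempty
  s1 : ∀ t ∈ T, G.Adj t a → G.Adj t b → False
  s2 : ∀ t ∈ T, G.Adj t c → G.Adj t d → False

/-- The precolouring extends to `T`. -/
def ExtTo (G : SimpleGraph V) (p q : Fin k) (a b c d : V) (T : Finset V) : Prop :=
  ∃ f : V → Fin k, f a = p ∧ f b = p ∧ f c = q ∧ f d = q ∧
    POn G f ((({a, b, c, d} : Finset V) ∪ T : Finset V) : Set V)

lemma ext_union {p q : Fin k} {a b c d : V} {T1 T2 : Finset V} (h1 : Cl G a b c d T1)
    (h2 : Cl G a b c d T2) (hdis : ∀ t ∈ T1, t ∉ T2)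
    (e1 : ExtTo G p q a b c d T1) (e2 : ExtTo G p q a b c d T2) : ExtTo G p q a b c d (T1 ∪ T2) := by
  obtain ⟨f, fa, fb, fc, fd, hf⟩ := e1
  obtain ⟨g, ga, gb, gc, gd, hg⟩ := e2
  refine ⟨fun v => if v ∈ T1 then f v else g v, by simp [h1.ha, ga], by simp [h1.hb, gb],
    by simp [h1.hc, gc], by simp [h1.hd, gd], ?_⟩
  have hS : ∀ s ∈ ({a, b, c, d} : Finset V), f s = g s := by
    intro s hs
    simp only [Finset.mem_insert, Finset.mem_singleton] at hs
    rcases hs with rfl | rfl | rfl | rfl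
    · rw [fa, ga]
    · rw [fb, gb]
    · rw [fc, gc]
    · rw [fd, gd]
  have key : ∀ p ∈ T1, ∀ q ∉ T1, q ∈ ({a, b, c, d} : Finset V) ∪ (T1 ∪ T2) → G.Adj p q →
      f p ≠ g q := by
    intro p hp q hq hq2 hpq
    have hqS : q ∈ ({a, b, c, d} : Finset V) := by
      rcases h1.cl p hp q hpq with h | h
      · exact absurd h hq
      · simpa using h
    rw [← hS q hqS]
    exact hf p (by simp [hp]) q (by rw [Finset.mem_coe]; exact Finset.mem_union_left _ hqS) hpq
  intro r hr s hs hrs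
  rw [Finset.mem_coe] at hr hs
  by_cases hr1 : r ∈ T1 <;> by_cases hs1 : s ∈ T1
  · simp only [hr1, hs1, if_true]
    exact hf r (by simp [hr1]) s (by simp [hs1]) hrs
  · simp only [hr1, hs1, if_true, if_false]
    exact key r hr1 s hs1 hs hrs
  · simp only [hr1, hs1, if_true, if_false]
    exact (key s hs1 r hr1 hr hrs.symm).symm
  · simp only [hr1, hs1, if_false]
    refine hg r ?_ s ?_ hrs
    · rw [Finset.mem_coe]
      simp only [Finset.mem_union] at hr ⊢
      tauto
    · rw [Finset.mem_coe]
      simp only [Finset.mem_union] at hs ⊢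
      tauto

lemma gc4 (hreg : ∀ v, (nb G v).card = k) {p q : Fin k} (hpq : p ≠ q) {a b c d : V}
    (hab : a ≠ b) (hcd : c ≠ d) (hac : a ≠ c) (had : a ≠ d) (hbc : b ≠ c) (hbd : b ≠ d)
    (nab : ¬ G.Adj a b) (ncd : ¬ G.Adj c d) (T : Finset V)
    (ha : a ∉ T) (hb : b ∉ T) (hc : c ∉ T) (hd : d ∉ T)
    (hext : ¬ ExtTo G p q a b c d T) : ∃ T' ⊆ T, NS G a b c d T' := by
  let f0 : V → Fin k := fun v => if v = a ∨ v = b then p else q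
  have fa : f0 a = p := by simp [f0]
  have fb : f0 b = p := by simp [f0]
  have fc : f0 c = q := by simp [f0, hac.symm, hbc.symm]
  have fd : f0 d = q := by simp [f0, had.symm, hbd.symm]
  have hP : POn G f0 (({a, b, c, d} : Finset V) : Set V) := by
    intro r hr s hs hrs
    have nab' : ¬ G.Adj b a := fun h => nab h.symm
    have ncd' : ¬ G.Adj d c := fun h => ncd h.symm
    rw [Finset.mem_coe] at hr hs
    simp only [Finset.mem_insert, Finset.mem_singleton] at hr hs
    rcases hr with rfl | rfl | rfl | rfl <;> rcases hs with rfl | rfl | rfl | rfl <;>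
      first
      | exact absurd rfl hrs.ne
      | exact absurd hrs nab
      | exact absurd hrs ncd
      | exact absurd hrs nab'
      | exact absurd hrs ncd'
      | (simp only [fa, fb, fc, fd]; first | exact hpq | exact hpq.symm)
  have hTS : ∀ t ∈ T, t ∉ ({a, b, c, d} : Finset V) := by
    intro t ht h
    simp only [Finset.mem_insert, Finset.mem_singleton] at h
    rcases h with rfl | rfl | rfl | rfl <;> contradiction
  rcases gc hreg {a, b, c, d} T f0 hP hTS with ⟨f, hf, hf2⟩ | ⟨T', hT', hne, hall⟩
  · exfalso
    apply hext
    exact ⟨f, by rw [hf a (by simp), fa], by rw [hf b (by simp), fb], by rw [hf c (by simp), fc],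
      by rw [hf d (by simp), fd], hf2⟩
  · refine ⟨T', hT', ⟨⟨fun h => ha (hT' h), fun h => hb (hT' h), fun h => hc (hT' h),
      fun h => hd (hT' h), ?_⟩, hne, ?_, ?_⟩⟩
    · intro t ht z htz
      have := (hall t ht).1 z htz
      simpa using this
    · intro t ht h1 h2
      exact hab ((hall t ht).2 a (by simp) b (by simp) h1 h2 (by rw [fa, fb]))
    · intro t ht h1 h2
      exact hcd ((hall t ht).2 c (by simp) d (by simp) h1 h2 (by rw [fc, fd]))

lemma Cl.sdiff {a b c d : V} {T T' : Finset V} (h : Cl G a b c d T) (h' : Cl G a b c d T') :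
    Cl G a b c d (T \ T') where
  ha := fun hh => h.ha (Finset.mem_sdiff.1 hh).1
  hb := fun hh => h.hb (Finset.mem_sdiff.1 hh).1
  hc := fun hh => h.hc (Finset.mem_sdiff.1 hh).1
  hd := fun hh => h.hd (Finset.mem_sdiff.1 hh).1
  cl := by
    intro t ht z htz
    rw [Finset.mem_sdiff] at ht
    rcases h.cl t ht.1 z htz with h1 | h1
    · by_cases hz : z ∈ T'
      · exfalso
        rcases h'.cl z hz t htz.symm with h2 | rfl | rfl | rfl | rfl
        · exact ht.2 h2
        · exact h.ha ht.1
        · exact h.hb ht.1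
        · exact h.hc ht.1
        · exact h.hd ht.1
      · left; exact Finset.mem_sdiff.2 ⟨h1, hz⟩
    · exact Or.inr h1

lemma ns_nonext (hreg : ∀ v, (nb G v).card = k) {p q : Fin k} (hpq : p ≠ q) {a b c d : V}
    (hab : a ≠ b) (hcd : c ≠ d) (hac : a ≠ c) (had : a ≠ d) (hbc : b ≠ c) (hbd : b ≠ d)
    (nab : ¬ G.Adj a b) (ncd : ¬ G.Adj c d) (n : ℕ) : ∀ T : Finset V, T.card ≤ n →
    Cl G a b c d T → ¬ ExtTo G p q a b c d T → ∃ T', NS G a b c d T' ∧ ¬ ExtTo G p q a b c d T' := by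
  induction n with
  | zero =>
    intro T hT hcl hext
    obtain ⟨T', hT', hns⟩ := gc4 hreg hpq hab hcd hac had hbc hbd nab ncd T hcl.ha hcl.hb hcl.hc
      hcl.hd hext
    rw [Nat.le_zero, Finset.card_eq_zero] at hT
    subst hT
    obtain ⟨t, ht⟩ := hns.ne
    exact absurd (hT' ht) (by simp)
  | succ n ih =>
    intro T hT hcl hext
    obtain ⟨T', hT', hns⟩ := gc4 hreg hpq hab hcd hac had hbc hbd nab ncd T hcl.ha hcl.hb hcl.hc
      hcl.hd hext
    by_cases he : ExtTo G p q a b c d T'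
    · have hcl2 := hcl.sdiff hns.toCl
      have he2 : ¬ ExtTo G p q a b c d (T \ T') := by
        intro he2
        apply hext
        have := ext_union hns.toCl hcl2 (fun t ht h => (Finset.mem_sdiff.1 h).2 ht) he he2
        rwa [Finset.union_sdiff_of_subset hT'] at this
      refine ih (T \ T') ?_ hcl2 he2
      have h1 := Finset.card_sdiff_add_card_eq_card hT'
      have h2 := Finset.card_pos.2 hns.ne
      omega
    · exact ⟨T', hns, he⟩

/-- Two eligible pairs of different type. -/
structure Quad (G : SimpleGraph V) (X : (V → Fin k) → Prop) (a b c d u v : V) : Prop where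
  ab : Elig G a b
  cd : Elig G c d
  X1 : ∀ f, IsProperColoring G k f → f a = f b → X f
  X2 : ∀ f, IsProperColoring G k f → f c = f d → ¬ X f
  ua : G.Adj u a
  ub : G.Adj u b
  vc : G.Adj v c
  vd : G.Adj v d
  ac : a ≠ c
  ad : a ≠ d
  bc : b ≠ c
  bd : b ≠ d
  uc : u ≠ c
  ud : u ≠ d
  va : v ≠ a
  vb : v ≠ b

lemma Quad.symm {a b c d u v : V} (h : Quad G X a b c d u v) :
    Quad G (fun f => ¬ X f) c d a b v u where
  ab := h.cd
  cd := h.ab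
  X1 := h.X2
  X2 := fun f hf hfe hn => hn (h.X1 f hf hfe)
  ua := h.vc
  ub := h.vd
  vc := h.ua
  vd := h.ub
  ac := h.ac.symm
  ad := h.bc.symm
  bc := h.ad.symm
  bd := h.bd.symm
  uc := h.va
  ud := h.vb
  va := h.uc
  vb := h.ud

lemma Quad.swap1 {a b c d u v : V} (h : Quad G X a b c d u v) : Quad G X b a c d u v where
  ab := h.ab.symm
  cd := h.cd
  X1 := fun f hf hfe => h.X1 f hf hfe.symm
  X2 := h.X2
  ua := h.ub
  ub := h.ua
  vc := h.vc
  vd := h.vd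
  ac := h.bc
  ad := h.bd
  bc := h.ac
  bd := h.ad
  uc := h.uc
  ud := h.ud
  va := h.vb
  vb := h.va

lemma Quad.swap2 {a b c d u v : V} (h : Quad G X a b c d u v) : Quad G X a b d c u v where
  ab := h.ab
  cd := h.cd.symm
  X1 := h.X1
  X2 := fun f hf hfe => h.X2 f hf hfe.symm
  ua := h.ua
  ub := h.ub
  vc := h.vd
  vd := h.vc
  ac := h.ad
  ad := h.ac
  bc := h.bd
  bd := h.bc
  uc := h.ud
  ud := h.uc
  va := h.va
  vb := h.vb

lemma quad_bad (hctx : Ctx G k X) {p q : Fin k} (hpq : p ≠ q) {a b c d u v : V}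
    (h : Quad G X a b c d u v) :
    ∃ T, NS G a b c d T ∧ ¬ ExtTo G p q a b c d T := by
  refine ns_nonext hctx.reg hpq h.ab.1 h.cd.1 h.ac h.ad h.bc h.bd h.ab.2.1 h.cd.2.1 _
    (Finset.univ \ {a, b, c, d}) le_rfl ⟨by simp, by simp, by simp, by simp, ?_⟩ ?_
  · intro t _ z _
    simp
    tauto
  · rintro ⟨f, fa, fb, fc, fd, hf⟩
    have hprop : IsProperColoring G k f := by
      intro r s hrs
      exact hf r (by simp) s (by simp) hrs
    exact h.X2 f hprop (by rw [fc, fd]) (h.X1 f hprop (by rw [fa, fb]))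

lemma ns_shrink (htc : NoTwoCut G) {a b c d u v : V} 
    (ua : G.Adj u a) (ub : G.Adj u b) (vc : G.Adj v c) (vd : G.Adj v d)
    (ac : a ≠ c) (ad : a ≠ d) (bc : b ≠ c) (bd : b ≠ d)
    (va : v ≠ a) (vb : v ≠ b) (uc : u ≠ c) (ud : u ≠ d) {T T' : Finset V}
    (hT : NS G a b c d T) {e f w : V} (he : e ∈ T) (hf : f ∈ T) (hw : w ∈ T)
    (hwe : G.Adj w e) (hwf : G.Adj w f) (hT' : NS G a b e f T') : T' ⊂ T := by
  have huT : u ∉ T := fun h => hT.s1 u h ua ub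
  have hvT : v ∉ T := fun h => hT.s2 v h vc vd
  have huT' : u ∉ T' := fun h => hT'.s1 u h ua ub
  have hwT' : w ∉ T' := fun h => hT'.s2 w h hwe hwf
  have hsub : T' ⊆ T := by
    intro r hrT'
    by_contra hrT
    have edge : ∀ t, t ∉ T → t ≠ a → t ≠ b → t ≠ c → t ≠ d → ∀ z ∈ T, ¬ G.Adj t z := by
      intro t h1 h2 h3 h4 h5 z hz htz
      rcases hT.cl z hz t htz.symm with h | h | h | h | h <;> contradiction
    have edge' : ∀ t ∈ T', ∀ z, z ∉ T → G.Adj t z → z ∈ T' ∨ z = a ∨ z = b := by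
      intro t ht z hz htz
      rcases hT'.cl t ht z htz with h | h | h | h | h
      · exact Or.inl h
      · exact Or.inr (Or.inl h)
      · exact Or.inr (Or.inr h)
      · exact absurd (h ▸ he) hz
      · exact absurd (h ▸ hf) hz
    by_cases hcase : c ∈ T' ∨ d ∈ T'
    · have hvT' : v ∈ T' := by
        rcases hcase with h | h
        · rcases edge' c h v hvT vc.symm with h | h | h
          · exact h
          · exact absurd h va
          · exact absurd h vb
        · rcases edge' d h v hvT vd.symm with h | h | h
          · exact h
          · exact absurd h va
          · exact absurd h vb
      have hcT' : c ∈ T' := by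
        rcases edge' v hvT' c hT.hc vc with h | h | h
        · exact h
        · exact absurd h.symm ac
        · exact absurd h.symm bc
      have hdT' : d ∈ T' := by
        rcases edge' v hvT' d hT.hd vd with h | h | h
        · exact h
        · exact absurd h.symm ad
        · exact absurd h.symm bd
      refine htc (Finset.univ.filter (fun z => z ∉ T ∧ z ≠ a ∧ z ≠ b ∧ z ∉ T')) a b u v
        (by simp [huT, huT', ua.ne, ub.ne]) (by simp) (by simp) (by simp [hvT']) va vb ?_
      intro t ht z htz
      simp only [Finset.mem_filter, Finset.mem_univ, true_and] at ht ⊢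
      by_cases hzT : z ∈ T
      · exact absurd htz (edge t ht.1 ht.2.1 ht.2.2.1 (fun h => ht.2.2.2 (h ▸ hcT'))
          (fun h => ht.2.2.2 (h ▸ hdT')) z hzT)
      · by_cases hzT' : z ∈ T'
        · rcases edge' z hzT' t ht.1 htz.symm with h | h | h
          · exact absurd h ht.2.2.2
          · exact absurd h ht.2.1
          · exact absurd h ht.2.2.1
        · by_cases hza : z = a
          · exact Or.inr (Or.inl hza)
          · by_cases hzb : z = b
            · exact Or.inr (Or.inr hzb)
            · exact Or.inl ⟨hzT, hza, hzb, hzT'⟩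
    · push Not at hcase
      refine htc (T' \ T) a b r u (Finset.mem_sdiff.2 ⟨hrT', hrT⟩)
        (fun h => hT'.ha (Finset.mem_sdiff.1 h).1) (fun h => hT'.hb (Finset.mem_sdiff.1 h).1)
        (fun h => huT' (Finset.mem_sdiff.1 h).1) ua.ne ub.ne ?_
      intro t ht z htz
      rw [Finset.mem_sdiff] at ht
      have hzT : z ∉ T := fun h => edge t ht.2 (fun h => hT'.ha (h ▸ ht.1))
        (fun h => hT'.hb (h ▸ ht.1)) (fun h => hcase.1 (h ▸ ht.1)) (fun h => hcase.2 (h ▸ ht.1))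
        z h htz
      rcases edge' t ht.1 z hzT htz with h | h
      · exact Or.inl (Finset.mem_sdiff.2 ⟨h, hzT⟩)
      · exact Or.inr h
  exact Finset.ssubset_iff_of_subset hsub |>.2 ⟨w, hw, hwT'⟩

/-- The final configuration. -/
structure Cfg (G : SimpleGraph V) (X : (V → Fin k) → Prop) (a b c d u v : V) (K : Finset V) :
    Prop extends Quad G X a b c d u v, NS G a b c d K where
  card : K.card + 1 = k
  clique : ∀ x ∈ K, ∀ y ∈ K, x ≠ y → G.Adj x y
  tab : ∀ x ∈ K, G.Adj x a ∨ G.Adj x b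
  tcd : ∀ x ∈ K, G.Adj x c ∨ G.Adj x d

lemma NS.symm {a b c d : V} {T : Finset V} (h : NS G a b c d T) : NS G c d a b T where
  ha := h.hc
  hb := h.hd
  hc := h.ha
  hd := h.hb
  cl := fun t ht z htz => by have := h.cl t ht z htz; tauto
  ne := h.ne
  s1 := h.s2
  s2 := h.s1

lemma NS.swap1 {a b c d : V} {T : Finset V} (h : NS G a b c d T) : NS G b a c d T where
  ha := h.hb
  hb := h.ha
  hc := h.hc
  hd := h.hd
  cl := fun t ht z htz => by have := h.cl t ht z htz; tauto
  ne := h.ne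
  s1 := fun t ht h1 h2 => h.s1 t ht h2 h1
  s2 := h.s2

lemma NS.swap2 {a b c d : V} {T : Finset V} (h : NS G a b c d T) : NS G a b d c T :=
  h.symm.swap1.symm

lemma Cfg.symm {a b c d u v : V} {K : Finset V} (h : Cfg G X a b c d u v K) :
    Cfg G (fun f => ¬ X f) c d a b v u K where
  toQuad := h.toQuad.symm
  toNS := h.toNS.symm
  card := h.card
  clique := h.clique
  tab := h.tcd
  tcd := h.tab

lemma Cfg.swap1 {a b c d u v : V} {K : Finset V} (h : Cfg G X a b c d u v K) :
    Cfg G X b a c d u v K where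
  toQuad := h.toQuad.swap1
  toNS := h.toNS.swap1
  card := h.card
  clique := h.clique
  tab := fun x hx => (h.tab x hx).symm
  tcd := h.tcd

lemma Cfg.swap2 {a b c d u v : V} {K : Finset V} (h : Cfg G X a b c d u v K) :
    Cfg G X a b d c u v K where
  toQuad := h.toQuad.swap2
  toNS := h.toNS.swap2
  card := h.card
  clique := h.clique
  tab := h.tab
  tcd := fun x hx => (h.tcd x hx).symm

lemma clique_count (hreg : ∀ v, (nb G v).card = k) {a b c d : V}
    (hab : a ≠ b) (hcd : c ≠ d) (hac : a ≠ c) (had : a ≠ d) (hbc : b ≠ c) (hbd : b ≠ d)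
    {T : Finset V} (h : NS G a b c d T) (hcl : ∀ x ∈ T, ∀ y ∈ T, x ≠ y → G.Adj x y)
    {t : V} (ht : t ∈ T) :
    T.card + ((if G.Adj t a then 1 else 0) + (if G.Adj t b then 1 else 0) +
      (if G.Adj t c then 1 else 0) + (if G.Adj t d then 1 else 0)) = k + 1 := by
  have heq : nb G t = T.erase t ∪ ({a, b, c, d} : Finset V).filter (fun z => G.Adj t z) := by
    ext z
    simp only [mem_nb, Finset.mem_union, Finset.mem_erase, Finset.mem_filter, Finset.mem_insert,
      Finset.mem_singleton]
    constructor
    · intro hz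
      rcases h.cl t ht z hz with h1 | h1
      · exact Or.inl ⟨hz.ne', h1⟩
      · exact Or.inr ⟨h1, hz⟩
    · rintro (⟨h1, h2⟩ | ⟨_, h2⟩)
      · exact hcl t ht z h2 h1.symm
      · exact h2
  have hdisj : Disjoint (T.erase t) (({a, b, c, d} : Finset V).filter (fun z => G.Adj t z)) := by
    rw [Finset.disjoint_left]
    intro z hz hz'
    have hzT := Finset.mem_of_mem_erase hz
    simp only [Finset.mem_filter, Finset.mem_insert, Finset.mem_singleton] at hz'
    rcases hz'.1 with rfl | rfl | rfl | rfl
    · exact h.ha hzT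
    · exact h.hb hzT
    · exact h.hc hzT
    · exact h.hd hzT
  have h1 := hreg t
  rw [heq, Finset.card_union_of_disjoint hdisj, Finset.card_erase_of_mem ht] at h1
  have h2 : 0 < T.card := Finset.card_pos.2 ⟨t, ht⟩
  have h3 : (({a, b, c, d} : Finset V).filter (fun z => G.Adj t z)).card =
      ((if G.Adj t a then 1 else 0) + (if G.Adj t b then 1 else 0) +
      (if G.Adj t c then 1 else 0) + (if G.Adj t d then 1 else 0)) := by
    rw [Finset.card_filter, Finset.sum_insert, Finset.sum_insert, Finset.sum_insert,
      Finset.sum_singleton]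
    · ring
    · simp [hcd]
    · simp [hbc, hbd]
    · simp [hab, hac, had]
  omega

lemma ext_clique (hctx : Ctx G k X) {p q : Fin k} (hpq : p ≠ q) {a b c d : V}
    (hab : Elig G a b) (hcd : Elig G c d)
    (hac : a ≠ c) (had : a ≠ d) (hbc : b ≠ c) (hbd : b ≠ d)
    {T : Finset V} (h : NS G a b c d T) (hcl : ∀ x ∈ T, ∀ y ∈ T, x ≠ y → G.Adj x y)
    (htouch : ∀ t ∈ T, G.Adj t a ∨ G.Adj t b ∨ G.Adj t c ∨ G.Adj t d)
    {x y : V} (hx : x ∈ T) (hy : y ∈ T) (hxy : x ≠ y)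
    (hxc : ¬ G.Adj x c) (hxd : ¬ G.Adj x d) (hya : ¬ G.Adj y a) (hyb : ¬ G.Adj y b) :
    ExtTo G p q a b c d T := by
  have neS : ∀ t ∈ T, t ≠ a ∧ t ≠ b ∧ t ≠ c ∧ t ≠ d := by
    intro t ht
    refine ⟨?_, ?_, ?_, ?_⟩ <;> rintro rfl
    · exact h.ha ht
    · exact h.hb ht
    · exact h.hc ht
    · exact h.hd ht
  obtain ⟨xa, xb, xc, xd⟩ := neS x hx
  obtain ⟨ya, yb, yc, yd⟩ := neS y hy
  let f0 : V → Fin k := fun v => if v = a ∨ v = b ∨ v = y then p else q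
  have fa : f0 a = p := by simp [f0]
  have fb : f0 b = p := by simp [f0]
  have fy : f0 y = p := by simp [f0]
  have fc : f0 c = q := by simp [f0, hac.symm, hbc.symm, yc.symm]
  have fd : f0 d = q := by simp [f0, had.symm, hbd.symm, yd.symm]
  have fx : f0 x = q := by simp [f0, xa, xb, hxy]
  have nab := hab.2.1
  have ncd := hcd.2.1
  have hP : POn G f0 (({a, b, c, d, x, y} : Finset V) : Set V) := by
    intro r hr s hs hrs
    have hrs' := hrs.symm
    rw [Finset.mem_coe] at hr hs
    simp only [Finset.mem_insert, Finset.mem_singleton] at hr hs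
    rcases hr with rfl | rfl | rfl | rfl | rfl | rfl <;>
      rcases hs with rfl | rfl | rfl | rfl | rfl | rfl <;>
      first
      | exact absurd rfl hrs.ne
      | contradiction
      | (simp only [fa, fb, fc, fd, fx, fy]; first | exact hpq | exact hpq.symm)
  have hTS : ∀ t ∈ T \ {x, y}, t ∉ ({a, b, c, d, x, y} : Finset V) := by
    intro t ht
    rw [Finset.mem_sdiff] at ht
    have := neS t ht.1
    have h2 := ht.2
    simp only [Finset.mem_insert, Finset.mem_singleton] at h2 ⊢
    tauto
  rcases gc hctx.reg {a, b, c, d, x, y} (T \ {x, y}) f0 hP hTS with ⟨f, hf, hf2⟩ |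
    ⟨T', hT', ⟨t, ht⟩, hall⟩
  · refine ⟨f, by rw [hf a (by simp), fa], by rw [hf b (by simp), fb], by rw [hf c (by simp), fc],
      by rw [hf d (by simp), fd], ?_⟩
    have hsub : ∀ z ∈ ({a, b, c, d} : Finset V) ∪ T,
        z ∈ ({a, b, c, d, x, y} : Finset V) ∪ (T \ {x, y}) := by
      intro z hz
      simp only [Finset.mem_union, Finset.mem_insert, Finset.mem_singleton,
        Finset.mem_sdiff] at hz ⊢
      tauto
    intro r hr s hs hrs
    exact hf2 r (hsub r hr) s (hsub s hs) hrs
  · exfalso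
    have htT := hT' ht
    rw [Finset.mem_sdiff] at htT
    have htx : t ≠ x := fun h => htT.2 (by simp [h])
    have hty : t ≠ y := fun h => htT.2 (by simp [h])
    have atx := hcl t htT.1 x hx htx
    have aty := hcl t htT.1 y hy hty
    have inj := (hall t ht).2
    rcases htouch t htT.1 with h1 | h1 | h1 | h1
    · exact ya (inj y (by simp) a (by simp) aty h1 (by rw [fa, fy]))
    · exact yb (inj y (by simp) b (by simp) aty h1 (by rw [fb, fy]))
    · exact xc (inj x (by simp) c (by simp) atx h1 (by rw [fc, fx]))
    · exact xd (inj x (by simp) d (by simp) atx h1 (by rw [fd, fx]))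

lemma exists_cfg_aux (hctx : Ctx G k X) {p q : Fin k} (hpq : p ≠ q) (n : ℕ) :
    ∀ (a b c d u v : V) (T : Finset V), T.card ≤ n → Quad G X a b c d u v → NS G a b c d T →
    ¬ ExtTo G p q a b c d T → ∃ a b c d u v K, Cfg G X a b c d u v K := by
  induction n with
  | zero =>
    intro a b c d u v T hT _ hns _
    have := Finset.card_pos.2 hns.ne
    omega
  | succ n ih =>
    intro a b c d u v T hT hq hns hext
    by_cases hP3 : ∃ w ∈ T, ∃ e ∈ T, ∃ f ∈ T, G.Adj w e ∧ G.Adj w f ∧ e ≠ f ∧ ¬ G.Adj e f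
    · obtain ⟨w, hw, e, he, f, hf, hwe, hwf, hef, hnef⟩ := hP3
      have hel : Elig G e f := ⟨hef, hnef, w, hwe, hwf⟩
      obtain ⟨g, hg, hgef⟩ := elig_col hctx hel
      have huT : u ∉ T := fun h => hns.s1 u h hq.ua hq.ub
      have hvT : v ∉ T := fun h => hns.s2 v h hq.vc hq.vd
      have neT : ∀ r, r ∉ T → ∀ s ∈ T, r ≠ s := fun r hr s hs h => hr (h ▸ hs)
      by_cases hXg : X g
      · have hq' : Quad G X e f c d w v :=
          { ab := hel
            cd := hq.cd
            X1 := fun g' hg' h' => hctx.H1 e f g g' hel hg hg' hgef h' hXg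
            X2 := hq.X2
            ua := hwe
            ub := hwf
            vc := hq.vc
            vd := hq.vd
            ac := (neT c hns.hc e he).symm
            ad := (neT d hns.hd e he).symm
            bc := (neT c hns.hc f hf).symm
            bd := (neT d hns.hd f hf).symm
            uc := (neT c hns.hc w hw).symm
            ud := (neT d hns.hd w hw).symm
            va := neT v hvT e he
            vb := neT v hvT f hf }
        obtain ⟨T', hns', hext'⟩ := quad_bad hctx hpq hq'
        have hlt : T' ⊂ T := ns_shrink hctx.tc hq.vc hq.vd hq.ua hq.ub hq.ac.symm hq.bc.symm
          hq.ad.symm hq.bd.symm hq.uc hq.ud hq.va hq.vb hns.symm he hf hw hwe hwf hns'.symm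
        have := Finset.card_lt_card hlt
        exact ih _ _ _ _ _ _ T' (by omega) hq' hns' hext'
      · have hq' : Quad G X a b e f u w :=
          { ab := hq.ab
            cd := hel
            X1 := hq.X1
            X2 := fun g' hg' h' hX' => hXg (hctx.H1 e f g' g hel hg' hg h' hgef hX')
            ua := hq.ua
            ub := hq.ub
            vc := hwe
            vd := hwf
            ac := neT a hns.ha e he
            ad := neT a hns.ha f hf
            bc := neT b hns.hb e he
            bd := neT b hns.hb f hf
            uc := neT u huT e he
            ud := neT u huT f hf
            va := (neT a hns.ha w hw).symm
            vb := (neT b hns.hb w hw).symm }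
        obtain ⟨T', hns', hext'⟩ := quad_bad hctx hpq hq'
        have hlt : T' ⊂ T := ns_shrink hctx.tc hq.ua hq.ub hq.vc hq.vd hq.ac hq.ad hq.bc hq.bd
          hq.va hq.vb hq.uc hq.ud hns he hf hw hwe hwf hns'
        have := Finset.card_lt_card hlt
        exact ih _ _ _ _ _ _ T' (by omega) hq' hns' hext'
    · push Not at hP3
      obtain ⟨w, hw⟩ := hns.ne
      let T1 := T.filter (fun z => z = w ∨ G.Adj w z)
      have hT1 : T1 ⊆ T := Finset.filter_subset _ _
      have hcl1 : Cl G a b c d T1 := by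
        refine ⟨fun h => hns.ha (hT1 h), fun h => hns.hb (hT1 h), fun h => hns.hc (hT1 h),
          fun h => hns.hd (hT1 h), ?_⟩
        intro t ht z htz
        rcases hns.cl t (hT1 ht) z htz with h | h
        · left
          simp only [T1, Finset.mem_filter] at ht ⊢
          refine ⟨h, ?_⟩
          rcases ht.2 with rfl | hwt
          · exact Or.inr htz
          · by_cases hzw : z = w
            · exact Or.inl hzw
            · exact Or.inr (hP3 t ht.1 w hw z h hwt.symm htz (fun h => hzw h.symm))
        · exact Or.inr h
      by_cases hTT : T1 = T
      · -- T is a clique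
        have hall : ∀ z ∈ T, z = w ∨ G.Adj w z := by
          intro z hz
          rw [← hTT] at hz
          exact (Finset.mem_filter.1 hz).2
        have hclq : ∀ x ∈ T, ∀ y ∈ T, x ≠ y → G.Adj x y := by
          intro x hx y hy hxy
          rcases hall x hx with rfl | h1
          · rcases hall y hy with rfl | h2
            · exact absurd rfl hxy
            · exact h2
          · rcases hall y hy with rfl | h2
            · exact h1.symm
            · exact hP3 w hw x hx y hy h1 h2 hxy
        have hcnt := fun t (ht : t ∈ T) => clique_count hctx.reg hq.ab.1 hq.cd.1 hq.ac hq.ad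
          hq.bc hq.bd hns hclq ht
        have huT : u ∉ T := fun h => hns.s1 u h hq.ua hq.ub
        have hvT : v ∉ T := fun h => hns.s2 v h hq.vc hq.vd
        obtain ⟨y, hy, hyQ⟩ : ∃ y ∈ T, G.Adj y c ∨ G.Adj y d := by
          by_contra hcon
          push Not at hcon
          refine hctx.tc T a b w u hw hns.ha hns.hb huT hq.ua.ne hq.ub.ne ?_
          intro t ht z htz
          rcases hns.cl t ht z htz with h | h | h | rfl | rfl
          · exact Or.inl h
          · exact Or.inr (Or.inl h)
          · exact Or.inr (Or.inr h)
          · exact absurd htz (hcon t ht).1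
          · exact absurd htz (hcon t ht).2
        obtain ⟨x, hx, hxP⟩ : ∃ x ∈ T, G.Adj x a ∨ G.Adj x b := by
          by_contra hcon
          push Not at hcon
          refine hctx.tc T c d w v hw hns.hc hns.hd hvT hq.vc.ne hq.vd.ne ?_
          intro t ht z htz
          rcases hns.cl t ht z htz with h | rfl | rfl | h | h
          · exact Or.inl h
          · exact absurd htz (hcon t ht).1
          · exact absurd htz (hcon t ht).2
          · exact Or.inr (Or.inl h)
          · exact Or.inr (Or.inr h)
        have hle : ∀ t ∈ T, (if G.Adj t a then 1 else 0) + (if G.Adj t b then 1 else 0) ≤ 1 ∧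
            (if G.Adj t c then 1 else 0) + (if G.Adj t d then 1 else 0) ≤ 1 := by
          intro t ht
          have h1 := hns.s1 t ht
          have h2 := hns.s2 t ht
          constructor
          · split_ifs <;> simp_all
          · split_ifs <;> simp_all
        have hx1 := hcnt x hx
        have hy1 := hcnt y hy
        have hxle := hle x hx
        have hyle := hle y hy
        have hxpos : 1 ≤ (if G.Adj x a then 1 else 0) + (if G.Adj x b then 1 else 0) := by
          rcases hxP with h | h
          · rw [if_pos h]; omega
          · rw [if_pos h]; omega
        have hypos : 1 ≤ (if G.Adj y c then 1 else 0) + (if G.Adj y d then 1 else 0) := by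
          rcases hyQ with h | h
          · rw [if_pos h]; omega
          · rw [if_pos h]; omega
        by_cases hTk : T.card = k
        · exfalso
          apply hext
          have z1 : ∀ P : Prop, (if P then 1 else 0) = 0 → ¬ P := by
            intro P h hP; rw [if_pos hP] at h; omega
          have z2 : ∀ P : Prop, (if P then 1 else 0) ≠ 0 → P := by
            intro P h; by_contra hP; rw [if_neg hP] at h; omega
          have hxc : ¬ G.Adj x c := z1 _ (by omega)
          have hxd : ¬ G.Adj x d := z1 _ (by omega)
          have hya : ¬ G.Adj y a := z1 _ (by omega)
          have hyb : ¬ G.Adj y b := z1 _ (by omega)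
          have hxy : x ≠ y := by
            rintro rfl
            rcases hyQ with h | h <;> contradiction
          refine ext_clique hctx hpq hq.ab hq.cd hq.ac hq.ad hq.bc hq.bd hns hclq ?_ hx hy hxy
            hxc hxd hya hyb
          intro t ht
          by_contra hcon
          push Not at hcon
          have h3 := hcnt t ht
          rw [if_neg hcon.1, if_neg hcon.2.1, if_neg hcon.2.2.1, if_neg hcon.2.2.2] at h3
          omega
        · refine ⟨a, b, c, d, u, v, T, hq, hns, by omega, hclq, ?_, ?_⟩
          · intro t ht
            by_contra hcon
            push Not at hcon
            have h3 := hcnt t ht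
            have h4 := hle t ht
            rw [if_neg hcon.1, if_neg hcon.2] at h3
            omega
          · intro t ht
            by_contra hcon
            push Not at hcon
            have h3 := hcnt t ht
            have h4 := hle t ht
            rw [if_neg hcon.1, if_neg hcon.2] at h3
            omega
      · -- split
        have hlt1 : T1 ⊂ T := lt_of_le_of_ne hT1 hTT
        have hw1 : w ∈ T1 := by simp [T1, hw]
        have hcl2 := hns.toCl.sdiff hcl1
        have hne2 : (T \ T1).Nonempty := by
          obtain ⟨z, hz, hz'⟩ := Finset.exists_of_ssubset hlt1
          exact ⟨z, Finset.mem_sdiff.2 ⟨hz, hz'⟩⟩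
        have c1 := Finset.card_lt_card hlt1
        have c2 := Finset.card_sdiff_add_card_eq_card hT1
        have c3 := Finset.card_pos.2 ⟨w, hw1⟩
        by_cases he1 : ExtTo G p q a b c d T1
        · have he2 : ¬ ExtTo G p q a b c d (T \ T1) := by
            intro he2
            apply hext
            have := ext_union hcl1 hcl2 (fun t ht h => (Finset.mem_sdiff.1 h).2 ht) he1 he2
            rwa [Finset.union_sdiff_of_subset hT1] at this
          exact ih a b c d u v (T \ T1) (by omega) hq ⟨hcl2, hne2,
            fun t ht => hns.s1 t (Finset.mem_sdiff.1 ht).1,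
            fun t ht => hns.s2 t (Finset.mem_sdiff.1 ht).1⟩ he2
        · exact ih a b c d u v T1 (by omega) hq ⟨hcl1, ⟨w, hw1⟩,
            fun t ht => hns.s1 t (hT1 ht), fun t ht => hns.s2 t (hT1 ht)⟩ he1

lemma exists_cfg (hctx : Ctx G k X) {a b c d u v : V} (hq : Quad G X a b c d u v) :
    ∃ a b c d u v K, Cfg G X a b c d u v K := by
  have hk := hctx.hk
  have hpq : (⟨0, by omega⟩ : Fin k) ≠ ⟨1, by omega⟩ := by simp
  obtain ⟨T, h1, h2⟩ := quad_bad hctx hpq hq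
  exact exists_cfg_aux hctx hpq _ a b c d u v T le_rfl hq h1 h2

end Struct

section Final

variable [Fintype V] {k : ℕ} {G : SimpleGraph V} {X : (V → Fin k) → Prop}

lemma pigeon (hreg : ∀ v, (nb G v).card = k) {f : V → Fin k} (hf : IsProperColoring G k f)
    (w : V) : ∃ z z', G.Adj w z ∧ G.Adj w z' ∧ z ≠ z' ∧ f z = f z' := by
  have h1 : ((Finset.univ : Finset (Fin k)).erase (f w)).card < (nb G w).card := by
    rw [Finset.card_erase_of_mem (Finset.mem_univ _), hreg w, Finset.card_univ, Fintype.card_fin]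
    have := (f w).pos
    omega
  obtain ⟨z, hz, z', hz', hne, heq⟩ := Finset.exists_ne_map_eq_of_card_lt_of_maps_to h1
    (f := f) (fun z hz => Finset.mem_coe.2 (Finset.mem_erase.2 ⟨(hf (mem_nb.1 hz)).symm, Finset.mem_univ _⟩))
  exact ⟨z, z', mem_nb.1 hz, mem_nb.1 hz', hne, heq⟩

lemma proper_K {K : Finset V} {f : V → Fin k}
    (h1 : ∀ p ∉ K, ∀ q ∉ K, G.Adj p q → f p ≠ f q)
    (h2 : ∀ x ∈ K, ∀ y ∈ K, x ≠ y → f x ≠ f y)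
    (h3 : ∀ t ∈ K, ∀ s ∉ K, G.Adj t s → f t ≠ f s) : IsProperColoring G k f := by
  intro p q hpq
  by_cases hp : p ∈ K <;> by_cases hq : q ∈ K
  · exact h2 p hp q hq hpq.ne
  · exact h3 p hp q hq hpq
  · exact (h3 q hq p hp hpq.symm).symm
  · exact h1 p hp q hq hpq

section

variable {a b c d u v : V} {K : Finset V}

lemma Cfg.nadj_of_eq (h : Cfg G X a b c d u v K) {α : V → Fin k} (hα : IsProperColoring G k α)
    (hab : α a = α b) : ∀ y ∈ K, α y ≠ α a := by
  intro y hy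
  rcases h.tab y hy with h1 | h1
  · exact hα h1
  · rw [hab]; exact hα h1

lemma Cfg.inj (h : Cfg G X a b c d u v K) {α : V → Fin k} (hα : IsProperColoring G k α)
    {x y : V} (hx : x ∈ K) (hy : y ∈ K) (hxy : α x = α y) : x = y := by
  by_contra hne
  exact hα (h.clique x hx y hy hne) hxy

lemma Cfg.surj (h : Cfg G X a b c d u v K) {α : V → Fin k} (hα : IsProperColoring G k α)
    (hab : α a = α b) {m : Fin k} (hm : m ≠ α a) : ∃ y ∈ K, α y = m := by
  have hsub : K.image α ⊆ (Finset.univ : Finset (Fin k)).erase (α a) := by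
    intro z hz
    obtain ⟨y, hy, rfl⟩ := Finset.mem_image.1 hz
    exact Finset.mem_erase.2 ⟨h.nadj_of_eq hα hab y hy, Finset.mem_univ _⟩
  have hcard : (K.image α).card = K.card :=
    Finset.card_image_of_injOn (fun x hx y hy hxy => h.inj hα hx hy hxy)
  have heq := Finset.eq_of_subset_of_card_le hsub (by
    rw [Finset.card_erase_of_mem (Finset.mem_univ _), hcard, Finset.card_univ, Fintype.card_fin]
    have := h.card
    omega)
  have : m ∈ K.image α := by rw [heq]; exact Finset.mem_erase.2 ⟨hm, Finset.mem_univ _⟩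
  obtain ⟨y, hy, hy2⟩ := Finset.mem_image.1 this
  exact ⟨y, hy, hy2⟩

lemma Cfg.uK (h : Cfg G X a b c d u v K) : u ∉ K := fun hu => h.s1 u hu h.ua h.ub

lemma Cfg.vK (h : Cfg G X a b c d u v K) : v ∉ K := fun hu => h.s2 v hu h.vc h.vd

/-- Exchanging the colours of two vertices of the clique. -/
lemma Cfg.exch (h : Cfg G X a b c d u v K) {α : V → Fin k} (hα : IsProperColoring G k α)
    (hab : α a = α b) (hac : α a = α c) {x y : V} (hx : x ∈ K) (hy : y ∈ K)
    (hd : ∀ t ∈ K, G.Adj t d → α (Equiv.swap x y t) ≠ α d) :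
    IsProperColoring G k (fun z => α (Equiv.swap x y z)) ∧
      ∀ z ∉ K, α (Equiv.swap x y z) = α z := by
  have hout : ∀ z ∉ K, Equiv.swap x y z = z := by
    intro z hz
    exact Equiv.swap_apply_of_ne_of_ne (fun h => hz (h ▸ hx)) (fun h => hz (h ▸ hy))
  have hin : ∀ z ∈ K, Equiv.swap x y z ∈ K := by
    intro z hz
    rw [Equiv.swap_apply_def]
    split_ifs <;> assumption
  refine ⟨proper_K (K := K) ?_ ?_ ?_, fun z hz => by rw [hout z hz]⟩
  · intro p hp q hq hpq
    simp only [hout p hp, hout q hq]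
    exact hα hpq
  · intro p hp q hq hpq he
    exact hpq ((Equiv.swap x y).injective (h.inj hα (hin p hp) (hin q hq) he))
  · intro t ht s hs hts
    simp only [hout s hs]
    have h0 := h.nadj_of_eq hα hab _ (hin t ht)
    rcases h.cl t ht s hts with h1 | rfl | rfl | rfl | rfl
    · exact absurd h1 hs
    · exact h0
    · rw [← hab]; exact h0
    · rw [← hac]; exact h0
    · exact hd t ht hts

lemma Cfg.L1 (hctx : Ctx G k X) (h : Cfg G X a b c d u v K) : ∃ w ∈ K, G.Adj w d := by
  by_contra hcon
  push Not at hcon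
  have hKc : ∀ y ∈ K, G.Adj y c := fun y hy => (h.tcd y hy).resolve_right (hcon y hy)
  obtain ⟨α, hα, hab⟩ := elig_col hctx h.ab
  obtain ⟨β, hβ, hcd⟩ := elig_col hctx h.cd
  have hac : α a = α c := by
    by_contra hne
    obtain ⟨y, hy, hyc⟩ := h.surj hα hab (fun h => hne h.symm)
    exact hα (hKc y hy) hyc
  obtain ⟨x0, hx0, hx0v⟩ := h.surj hα hab (m := α v) (by rw [hac]; exact hα h.vc)
  have hN : insert v K = nb G c := by
    apply Finset.eq_of_subset_of_card_le
    · intro z hz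
      rcases Finset.mem_insert.1 hz with rfl | hz
      · exact mem_nb.2 h.vc.symm
      · exact mem_nb.2 (hKc z hz).symm
    · rw [hctx.reg c, Finset.card_insert_of_notMem h.vK, h.card]
  have key : ∀ x ∈ K, β v = β x → False := by
    intro x hx hvx
    obtain ⟨hf, hfo⟩ := h.exch hα hab hac hx hx0 (fun t ht h' => absurd h' (hcon t ht))
    have hel : Elig G v x := by
      refine ⟨?_, fun h' => hβ h' hvx, c, h.vc.symm, (hKc x hx).symm⟩
      rintro rfl
      exact h.vK hx
    refine h.X2 β hβ hcd (hctx.H1 v x _ β hel hf hβ ?_ hvx (h.X1 _ hf ?_))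
    · simp only [hfo v h.vK, Equiv.swap_apply_left, hx0v]
    · simp only [hfo a h.ha, hfo b h.hb, hab]
  obtain ⟨z, z', hz, hz', hne, heq⟩ := pigeon hctx.reg hβ c
  rw [← mem_nb, ← hN, Finset.mem_insert] at hz hz'
  rcases hz with rfl | hz <;> rcases hz' with rfl | hz'
  · exact hne rfl
  · exact key z' hz' heq
  · exact key z hz heq.symm
  · exact hne (h.inj hβ hz hz' heq)

lemma Cfg.third (hctx : Ctx G k X) (h : Cfg G X a b c d u v K) (x y : V) :
    ∃ z ∈ K, z ≠ x ∧ z ≠ y := by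
  have h1 : ({x, y} : Finset V).card < K.card := by
    have := h.card
    have := hctx.hk
    have := Finset.card_le_two (a := x) (b := y)
    omega
  obtain ⟨z, hz, hz'⟩ := Finset.exists_mem_notMem_of_card_lt_card h1
  simp only [Finset.mem_insert, Finset.mem_singleton, not_or] at hz'
  exact ⟨z, hz, hz'⟩

lemma Cfg.neK (h : Cfg G X a b c d u v K) {y : V} (hy : y ∈ K) :
    a ≠ y ∧ b ≠ y ∧ c ≠ y ∧ d ≠ y ∧ v ≠ y := by
  refine ⟨?_, ?_, ?_, ?_, ?_⟩ <;> rintro rfl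
  · exact h.ha hy
  · exact h.hb hy
  · exact h.hc hy
  · exact h.hd hy
  · exact h.vK hy

lemma Cfg.L2 (hctx : Ctx G k X) (h : Cfg G X a b c d u v K) {x y : V} (hx : x ∈ K) (hy : y ∈ K)
    (xa : G.Adj x a) (yb : G.Adj y b) {f g : V → Fin k} (hf : IsProperColoring G k f)
    (hfay : f a = f y) (hXf : X f) (hg : IsProperColoring G k g) (hgbx : g b = g x) : X g := by
  by_contra hXg
  have nya : ¬ G.Adj a y := fun h' => h.s1 y hy h'.symm yb
  have nxb : ¬ G.Adj b x := fun h' => h.s1 x hx xa h'.symm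
  have hxy : x ≠ y := by rintro rfl; exact nya xa.symm
  have axy := h.clique x hx y hy hxy
  obtain ⟨ax, bx, cx, dx, vx⟩ := h.neK hx
  obtain ⟨ay, bney, cy, dy, vy⟩ := h.neK hy
  have e1 : Elig G a y := ⟨ay, nya, x, xa, axy⟩
  have e2 : Elig G b x := ⟨bx, nxb, y, yb, axy.symm⟩
  have hk := hctx.hk
  have hpq : (⟨0, by omega⟩ : Fin k) ≠ ⟨1, by omega⟩ := by simp
  obtain ⟨T, hT, hns⟩ := gc4 hctx.reg hpq ay bx h.ab.1 ax bney.symm hxy.symm nya nxb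
    (Finset.univ \ {a, y, b, x}) (by simp) (by simp) (by simp) (by simp) (by
      rintro ⟨e, ea, ey, eb, ex, he⟩
      have he' : IsProperColoring G k e := fun p q hpq => he p (by simp) q (by simp) hpq
      exact hXg (hctx.H1 b x e g e2 he' hg (by rw [eb, ex]) hgbx
        (hctx.H1 a y f e e1 hf he' hfay (by rw [ea, ey]) hXf)))
  have hTK : ∀ z ∈ K, z ∉ T := by
    intro z hz hzT
    have zx : z ≠ x := by rintro rfl; exact hns.hd hzT
    have zy : z ≠ y := by rintro rfl; exact hns.hb hzT
    rcases h.tab z hz with h1 | h1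
    · exact hns.s1 z hzT h1 (h.clique z hz y hy zy)
    · exact hns.s2 z hzT h1 (h.clique z hz x hx zx)
  have step : ∀ r ∈ T, ∀ s, G.Adj r s → a ≠ s → b ≠ s → x ≠ s → y ≠ s → s ∈ T := by
    intro r hr s hrs h1 h2 h3 h4
    rcases hns.cl r hr s hrs with h' | h' | h' | h' | h'
    · exact h'
    · exact absurd h'.symm h1
    · exact absurd h'.symm h4
    · exact absurd h'.symm h2
    · exact absurd h'.symm h3
  have hcd : c ∈ T → d ∈ T := fun hc => step v (step c hc v h.vc.symm h.va.symm h.vb.symm vx.symm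
    vy.symm) d h.vd h.ad h.bd dx.symm dy.symm
  have hdc : d ∈ T → c ∈ T := fun hc => step v (step d hc v h.vd.symm h.va.symm h.vb.symm vx.symm
    vy.symm) c h.vc h.ac h.bc cx.symm cy.symm
  by_cases hc : c ∈ T
  · obtain ⟨z, hz, zx, zy⟩ := h.third hctx x y
    obtain ⟨az, bz, _⟩ := h.neK hz
    rcases h.tcd z hz with h1 | h1
    · exact hTK z hz (step c hc z h1.symm az bz zx.symm zy.symm)
    · exact hTK z hz (step d (hcd hc) z h1.symm az bz zx.symm zy.symm)
  · obtain ⟨t0, ht0⟩ := hns.ne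
    refine hctx.tc T a b t0 c ht0 hns.ha hns.hc hc h.ac.symm h.bc.symm ?_
    have aux : ∀ t ∈ T, ∀ z ∈ K, G.Adj t z → False := by
      intro t ht z hz htz
      rcases h.cl z hz t htz.symm with h1 | rfl | rfl | rfl | rfl
      · exact hTK t h1 ht
      · exact hns.ha ht
      · exact hns.hc ht
      · exact hc ht
      · exact hc (hdc ht)
    intro t ht z htz
    rcases hns.cl t ht z htz with h' | h' | h' | h' | h'
    · exact Or.inl h'
    · exact Or.inr (Or.inl h')
    · exact (aux t ht y hy (h' ▸ htz)).elim
    · exact Or.inr (Or.inr h')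
    · exact (aux t ht x hx (h' ▸ htz)).elim

lemma Cfg.L3 (hctx : Ctx G k X) (h : Cfg G X a b c d u v K) {y : V} (hy : y ∈ K)
    (yd : G.Adj y d) {g : V → Fin k} (hg : IsProperColoring G k g) (hgcy : g c = g y) : X g := by
  by_contra hXg
  obtain ⟨α, hα, hab⟩ := elig_col hctx h.ab
  have hXα := h.X1 α hα hab
  have hcd : α c ≠ α d := fun h' => h.X2 α hα h' hXα
  have main : ∀ x ∈ K, G.Adj x c → ∀ f, IsProperColoring G k f → f d = f x → X f → False := by
    intro x hx xc f hf hfd hXf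
    exact h.symm.L2 hctx.neg hx hy xc yd hg hgcy hXg hf hfd hXf
  by_cases hda : α d = α a
  · obtain ⟨y0, hy0, hy0c⟩ := h.surj hα hab (m := α c) (fun h' => hcd (h'.trans hda.symm))
    have y0d : G.Adj y0 d := (h.tcd y0 hy0).resolve_left (fun h' => hα h' hy0c)
    obtain ⟨x1, hx1, x1c⟩ := h.swap2.L1 hctx
    have nd : ¬ G.Adj d x1 := fun h' => h.s2 x1 hx1 x1c h'.symm
    have hne : y0 ≠ x1 := by rintro rfl; exact nd y0d.symm
    have hel : Elig G d x1 := ⟨(h.neK hx1).2.2.2.1, nd, y0, y0d, h.clique y0 hy0 x1 hx1 hne⟩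
    obtain ⟨f, hf, hfd⟩ := elig_col hctx hel
    by_cases hXf : X f
    · exact main x1 hx1 x1c f hf hfd hXf
    · exact h.swap2.symm.L2 hctx.neg hy0 hx1 y0d x1c hf hfd hXf hα hy0c.symm hXα
  · obtain ⟨x0, hx0, hx0d⟩ := h.surj hα hab hda
    have x0c : G.Adj x0 c := (h.tcd x0 hx0).resolve_right (fun h' => hα h' hx0d)
    exact main x0 hx0 x0c α hα hx0d.symm hXα

lemma Cfg.L4a (hctx : Ctx G k X) (h : Cfg G X a b c d u v K) {α : V → Fin k}
    (hα : IsProperColoring G k α) (hab : α a = α b) {y : V} (hy : y ∈ K) (ya : G.Adj y a)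
    (hc : G.Adj y c → α c ≠ α a) (hd : G.Adj y d → α d ≠ α a) :
    (∃ z ∉ K, G.Adj a z ∧ α z = α y) ∧ ∃ z ∉ K, G.Adj b z ∧ α z = α y := by
  have hXα := h.X1 α hα hab
  have nyb : ¬ G.Adj y b := fun h' => h.s1 y hy ya h'
  obtain ⟨ay, b_y, _⟩ := h.neK hy
  have fin : ∀ U, ClosedIn G α (α a) (α y) U Set.univ →
      Swp (α a) (α y) U α b = Swp (α a) (α y) U α y → False := by
    intro U hU heq
    have hP : IsProperColoring G k (Swp (α a) (α y) U α) := fun p q hpq =>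
      swp_pOn (R := Set.univ) (fun p _ q _ h' => hα h') hU p trivial q trivial hpq
    exact h.swap1.symm.L3 hctx.neg hy ya hP heq ((hctx.H2 _ _ _ _ hα hU).1 hXα)
  constructor
  · by_contra hcon
    push Not at hcon
    refine fin {y, a} ?_ ?_
    · rintro p - q - hpq hp hq h1 h2
      simp only [Set.mem_insert_iff, Set.mem_singleton_iff, not_or] at hp hq
      rcases hp with rfl | rfl
      · rcases h2 with h2 | h2
        · rcases h.cl p hy q hpq with h3 | rfl | rfl | rfl | rfl
          · exact h.nadj_of_eq hα hab q h3 h2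
          · exact hq.2 rfl
          · exact nyb hpq
          · exact hc hpq h2
          · exact hd hpq h2
        · exact hα hpq h2.symm
      · rcases h2 with h2 | h2
        · exact hα hpq h2.symm
        · by_cases hqK : q ∈ K
          · exact hq.1 (h.inj hα hqK hy h2)
          · exact hcon q hqK hpq h2
    · simp [Swp, b_y, h.ab.1.symm, hab]
  · by_contra hcon
    push Not at hcon
    refine fin {b} ?_ ?_
    · rintro p - q - hpq hp hq h1 h2
      simp only [Set.mem_singleton_iff] at hp hq
      subst hp
      rcases h2 with h2 | h2
      · exact hα hpq (hab.symm.trans h2.symm)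
      · by_cases hqK : q ∈ K
        · have := h.inj hα hqK hy h2
          subst this
          exact nyb hpq.symm
        · exact hcon q hqK hpq h2
    · simp [Swp, b_y.symm, hab]

lemma Cfg.L4 (hctx : Ctx G k X) (h : Cfg G X a b c d u v K) {α : V → Fin k}
    (hα : IsProperColoring G k α) (hab : α a = α b) {y : V} (hy : y ∈ K)
    (hc : G.Adj y c → α c ≠ α a) (hd : G.Adj y d → α d ≠ α a) :
    (∃ z ∉ K, G.Adj a z ∧ α z = α y) ∧ ∃ z ∉ K, G.Adj b z ∧ α z = α y := by
  rcases h.tab y hy with h1 | h1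
  · exact h.L4a hctx hα hab hy h1 hc hd
  · exact (h.swap1.L4a hctx hα hab.symm hy h1 (by rwa [← hab]) (by rwa [← hab])).symm

lemma count_K (hreg : ∀ v, (nb G v).card = k) {α : V → Fin k} {e : V} {m0 : Fin k}
    (h : ∀ m, m ≠ m0 → ∃ z ∉ K, G.Adj e z ∧ α z = m) : (nb G e ∩ K).card ≤ 1 := by
  have hsub : (Finset.univ : Finset (Fin k)).erase m0 ⊆ (nb G e \ K).image α := by
    intro m hm
    obtain ⟨z, hz, hez, rfl⟩ := h m (Finset.mem_erase.1 hm).1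
    exact Finset.mem_image.2 ⟨z, Finset.mem_sdiff.2 ⟨mem_nb.2 hez, hz⟩, rfl⟩
  have h1 := Finset.card_le_card hsub
  have h2 : ((nb G e \ K).image α).card ≤ (nb G e \ K).card := Finset.card_image_le
  rw [Finset.card_erase_of_mem (Finset.mem_univ _), Finset.card_univ, Fintype.card_fin] at h1
  have h3 := Finset.card_sdiff_add_card_inter (nb G e) K
  rw [hreg] at h3
  omega

lemma Cfg.noAB (hctx : Ctx G k X) (h : Cfg G X a b c d u v K) {α : V → Fin k} {m0 : Fin k}
    (h1 : ∀ m, m ≠ m0 → (∃ z ∉ K, G.Adj a z ∧ α z = m) ∧ ∃ z ∉ K, G.Adj b z ∧ α z = m) :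
    False := by
  have ca := count_K hctx.reg (fun m hm => (h1 m hm).1)
  have cb := count_K hctx.reg (fun m hm => (h1 m hm).2)
  have hsub : K ⊆ (nb G a ∩ K) ∪ (nb G b ∩ K) := by
    intro z hz
    simp only [Finset.mem_union, Finset.mem_inter, mem_nb]
    rcases h.tab z hz with h' | h'
    · exact Or.inl ⟨h'.symm, hz⟩
    · exact Or.inr ⟨h'.symm, hz⟩
  have h2 := Finset.card_le_card hsub
  have h3 := Finset.card_union_le (nb G a ∩ K) (nb G b ∩ K)
  have := h.card
  have := hctx.hk
  omega

lemma Cfg.L5 (hctx : Ctx G k X) (h : Cfg G X a b c d u v K) {α : V → Fin k}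
    (hα : IsProperColoring G k α) (hab : α a = α b) : α a = α c ∨ α a = α d := by
  by_contra hcon
  push Not at hcon
  refine h.noAB hctx (α := α) (m0 := α a) ?_
  intro m hm
  obtain ⟨y, hy, rfl⟩ := h.surj hα hab hm
  exact h.L4 hctx hα hab hy (fun _ => hcon.1.symm) (fun _ => hcon.2.symm)

lemma Cfg.L6a (hctx : Ctx G k X) (h : Cfg G X a b c d u v K) {α : V → Fin k}
    (hα : IsProperColoring G k α) (hab : α a = α b) (hac : α a = α c) {m : Fin k}
    (hma : m ≠ α a) (hmd : m ≠ α d) :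
    (∃ z ∉ K, G.Adj a z ∧ α z = m) ∧ ∃ z ∉ K, G.Adj b z ∧ α z = m := by
  have hda : α d ≠ α a := fun h' => h.X2 α hα (hac.symm.trans h'.symm) (h.X1 α hα hab)
  obtain ⟨y, hy, yd⟩ := h.L1 hctx
  obtain ⟨w, hw, rfl⟩ := h.surj hα hab hma
  obtain ⟨hf, hfo⟩ := h.exch hα hab hac hy hw (by
    intro t ht htd
    rw [Equiv.swap_apply_def]
    split_ifs with h1 h2
    · exact hmd
    · exact hα yd
    · exact hα htd)
  have := h.L4 hctx hf (by simp only [hfo a h.ha, hfo b h.hb, hab]) hy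
    (fun yc => absurd yd (fun h' => h.s2 y hy yc h'))
    (fun _ => by simp only [hfo a h.ha, hfo d h.hd]; exact hda)
  simp only [Equiv.swap_apply_left] at this
  obtain ⟨⟨z, hz, h1, h2⟩, ⟨z', hz', h1', h2'⟩⟩ := this
  rw [hfo z hz] at h2
  rw [hfo z' hz'] at h2'
  exact ⟨⟨z, hz, h1, h2⟩, ⟨z', hz', h1', h2'⟩⟩

lemma Cfg.L6 (hctx : Ctx G k X) (h : Cfg G X a b c d u v K) {α : V → Fin k}
    (hα : IsProperColoring G k α) (hab : α a = α b) (hac : α a = α c) :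
    (nb G d ∩ K).card ≤ 1 := by
  have hda : α d ≠ α a := fun h' => h.X2 α hα (hac.symm.trans h'.symm) (h.X1 α hα hab)
  refine count_K hctx.reg (α := α) (m0 := α d) ?_
  intro m hmd
  by_contra hcon
  push Not at hcon
  by_cases hma : m = α a
  · subst hma
    have hU : ClosedIn G α (α d) (α a) {d} Set.univ := by
      rintro p - q - hpq hp hq h1 h2
      simp only [Set.mem_singleton_iff] at hp hq
      subst hp
      rcases h2 with h2 | h2
      · exact hα hpq h2.symm
      · by_cases hqK : q ∈ K
        · exact h.nadj_of_eq hα hab q hqK h2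
        · exact hcon q hqK hpq h2
    have hP : IsProperColoring G k (Swp (α d) (α a) {d} α) := fun p q hpq =>
      swp_pOn (R := Set.univ) (fun p _ q _ h' => hα h') hU p trivial q trivial hpq
    refine h.X2 _ hP ?_ (h.X1 _ hP ?_)
    · simp [Swp, h.cd.1, hac]
    · simp [Swp, h.ad, h.bd, hab]
  · let f : V → Fin k := fun z => if z = d then m else
      if z ∈ K then Equiv.swap (α d) m (α z) else α z
    have fd : f d = m := by simp [f]
    have fK : ∀ z ∈ K, f z = Equiv.swap (α d) m (α z) := by
      intro z hz
      have : z ≠ d := (h.neK hz).2.2.2.1.symm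
      simp [f, this, hz]
    have fo : ∀ z ∉ K, z ≠ d → f z = α z := by
      intro z hz hzd
      simp [f, hz, hzd]
    have hfix : Equiv.swap (α d) m (α a) = α a :=
      Equiv.swap_apply_of_ne_of_ne hda.symm (fun h' => hma h'.symm)
    have hKa : ∀ z ∈ K, f z ≠ α a := by
      intro z hz heq
      rw [fK z hz, ← hfix] at heq
      exact h.nadj_of_eq hα hab z hz ((Equiv.swap (α d) m).injective heq)
    have fa := fo a h.ha h.ad
    have fb := fo b h.hb h.bd
    have fc := fo c h.hc h.cd.1
    have hf : IsProperColoring G k f := by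
      refine proper_K (K := K) ?_ ?_ ?_
      · intro p hp q hq hpq
        by_cases hpd : p = d
        · subst hpd
          rw [fd, fo q hq hpq.ne']
          exact fun h' => hcon q hq hpq h'.symm
        · by_cases hqd : q = d
          · subst hqd
            rw [fd, fo p hp hpq.ne]
            exact fun h' => hcon p hp hpq.symm h'
          · rw [fo p hp hpd, fo q hq hqd]
            exact hα hpq
      · intro x hx y hy hxy heq
        rw [fK x hx, fK y hy] at heq
        exact hxy (h.inj hα hx hy ((Equiv.swap (α d) m).injective heq))
      · intro t ht s hs hts
        rcases h.cl t ht s hts with h1 | rfl | rfl | rfl | rfl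
        · exact absurd h1 hs
        · rw [fa]; exact hKa t ht
        · rw [fb, ← hab]; exact hKa t ht
        · rw [fc, ← hac]; exact hKa t ht
        · rw [fd, fK t ht]
          intro heq
          have h2 : Equiv.swap (α s) m (α t) = Equiv.swap (α s) m (α s) := by
            rw [heq, Equiv.swap_apply_left]
          exact hα hts ((Equiv.swap (α s) m).injective h2)
    refine h.noAB hctx (α := α) (m0 := α a) ?_
    intro m' hm'
    by_cases hm'd : m' = α d
    · subst hm'd
      have := h.L6a hctx hf (by rw [fa, fb, hab]) (by rw [fa, fc, hac]) (m := α d)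
        (by rw [fa]; exact hda) (by rw [fd]; exact hmd.symm)
      obtain ⟨⟨z, hz, h1, h2⟩, ⟨z', hz', h1', h2'⟩⟩ := this
      have zd : z ≠ d := by rintro rfl; exact hmd (fd.symm.trans h2)
      have zd' : z' ≠ d := by rintro rfl; exact hmd (fd.symm.trans h2')
      rw [fo z hz zd] at h2
      rw [fo z' hz' zd'] at h2'
      exact ⟨⟨z, hz, h1, h2⟩, ⟨z', hz', h1', h2'⟩⟩
    · exact h.L6a hctx hα hab hac hm' hm'd

lemma Cfg.fin1 (hctx : Ctx G k X) (h : Cfg G X a b c d u v K) {α β : V → Fin k}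
    (hα : IsProperColoring G k α) (hab : α a = α b) (hac : α a = α c)
    (hβ : IsProperColoring G k β) (hcd : β c = β d) (hca : β c = β a) : False := by
  have c1 := h.L6 hctx hα hab hac
  have c2 := h.symm.L6 hctx.neg hβ hcd hca
  have hlt : ((nb G d ∩ K) ∪ (nb G b ∩ K)).card < K.card := by
    have h3 := Finset.card_union_le (nb G d ∩ K) (nb G b ∩ K)
    have := h.card
    have := hctx.hk
    omega
  obtain ⟨w, hw, hw'⟩ := Finset.exists_mem_notMem_of_card_lt_card hlt
  simp only [Finset.mem_union, Finset.mem_inter, mem_nb, hw, and_true, not_or] at hw'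
  have wa : G.Adj w a := (h.tab w hw).resolve_right (fun h' => hw'.2 h'.symm)
  have wc : G.Adj w c := (h.tcd w hw).resolve_right (fun h' => hw'.1 h'.symm)
  have hel : Elig G a c := ⟨h.ac, fun h' => hα h' hac, w, wa, wc⟩
  exact h.X2 β hβ hcd (hctx.H1 a c α β hel hα hβ hac hca.symm (h.X1 α hα hab))

lemma Cfg.false (hctx : Ctx G k X) (h : Cfg G X a b c d u v K) : False := by
  obtain ⟨α, hα, hab⟩ := elig_col hctx h.ab
  obtain ⟨β, hβ, hcd⟩ := elig_col hctx h.cd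
  rcases h.L5 hctx hα hab with h1 | h1 <;> rcases h.symm.L5 hctx.neg hβ hcd with h2 | h2
  · exact h.fin1 hctx hα hab h1 hβ hcd h2
  · exact h.swap1.fin1 hctx hα hab.symm (hab.symm.trans h1) hβ hcd h2
  · exact h.swap2.fin1 hctx hα hab h1 hβ hcd.symm (hcd.symm.trans h2)
  · exact h.swap1.swap2.fin1 hctx hα hab.symm (hab.symm.trans h1) hβ hcd.symm
      (hcd.symm.trans h2)

end

end Final

/-- for `k ≥ 4`, a 3-connected `k`-regular graph of diameter at least 3
has all its proper `k`-colourings in a single Kempe class. -/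
theorem stmt12 {V : Type*} [Fintype V] (k : ℕ) (hk : 4 ≤ k) (G : SimpleGraph V)
    [DecidableRel G.Adj] (hreg : G.IsRegularOfDegree k) (h3c : ThreeConnected G)
    (hdiam : ∃ u v : V, 3 ≤ G.dist u v) : KempeClass G k := by
  have hreg' : ∀ v, (nb G v).card = k := by
    intro v
    rw [← hreg v, ← SimpleGraph.card_neighborFinset_eq_degree]
    congr 1
    ext z
    rw [mem_nb, SimpleGraph.mem_neighborFinset]
  have h2 := noTwoCut_of_threeConnected h3c
  intro c c' hc hc'
  by_contra hcon
  have hctx : Ctx G k (fun e => KempeEquiv G k c e) := by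
    refine ⟨hk, hreg', h2, ?_, ?_⟩
    · intro x y e e' he hpe hpe' hxy hxy' hX
      exact Relation.ReflTransGen.trans hX (mono_equiv hreg' h2 he e e' hpe hpe' hxy hxy')
    · intro e a b U _ hU
      constructor
      · intro hX
        exact Relation.ReflTransGen.trans hX (kempe_of_closed hU)
      · intro hX
        have := kempe_of_closed (swp_closed hU)
        rw [swp_swp] at this
        exact Relation.ReflTransGen.trans hX this
  obtain ⟨u, v, huv⟩ := hdiam
  obtain ⟨a, b, ua, ub, ab, hab⟩ := pigeon hreg' hc u
  obtain ⟨p, q, vp, vq, pq, hpq⟩ := pigeon hreg' hc' v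
  have d1 : ¬ G.Adj u v := by
    intro h
    have := SimpleGraph.dist_le h.toWalk
    simp at this
    omega
  have d2 : ∀ z, G.Adj u z → G.Adj v z → False := by
    intro z h h'
    have := SimpleGraph.dist_le (SimpleGraph.Walk.cons h h'.symm.toWalk)
    simp at this
    omega
  have hE1 : Elig G a b := ⟨ab, fun h => hc h hab, u, ua, ub⟩
  have hE2 : Elig G p q := ⟨pq, fun h => hc' h hpq, v, vp, vq⟩
  have hq : Quad G (fun e => KempeEquiv G k c e) a b p q u v :=
    { ab := hE1
      cd := hE2
      X1 := fun f hf hfab => mono_equiv hreg' h2 hE1 c f hc hf hab hfab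
      X2 := fun f hf hfpq hX => hcon
        (Relation.ReflTransGen.trans hX (mono_equiv hreg' h2 hE2 f c' hf hc' hfpq hpq))
      ua := ua
      ub := ub
      vc := vp
      vd := vq
      ac := by rintro rfl; exact d2 _ ua vp
      ad := by rintro rfl; exact d2 _ ua vq
      bc := by rintro rfl; exact d2 _ ub vp
      bd := by rintro rfl; exact d2 _ ub vq
      uc := by rintro rfl; exact d1 vp.symm
      ud := by rintro rfl; exact d1 vq.symm
      va := by rintro rfl; exact d1 ua
      vb := by rintro rfl; exact d1 ub }
  obtain ⟨_, _, _, _, _, _, _, hcfg⟩ := exists_cfg hctx hq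
  exact hcfg.false hctx
end

section
/- Let k ≥ 4 be an integer and let G be a 3-connected k-regular graph of diameter 2. Then the set of proper k-colourings of G forms a single Kempe class. -/
open SimpleGraph
open scoped Classical

variable {V : Type*}

namespace KC

/-- Swap colours `a`, `b` on a set `S` that is closed inside `T`. -/
def MvOn {V : Type*} (H : SimpleGraph V) (k : ℕ) (T : Set V) (c c' : V → Fin k) : Prop :=
  ∃ (a b : Fin k) (S : Set V),
    (∀ x ∈ T, ∀ y ∈ T, H.Adj x y → (c x = a ∨ c x = b) → (c y = a ∨ c y = b) → x ∈ S → y ∈ S) ∧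
    ∀ v ∈ T, c' v = if v ∈ S then Equiv.swap a b (c v) else c v

def PrOn {V : Type*} (H : SimpleGraph V) (k : ℕ) (T : Set V) (c : V → Fin k) : Prop :=
  ∀ x ∈ T, ∀ y ∈ T, H.Adj x y → c x ≠ c y

lemma swap_mem {k : ℕ} (a b x : Fin k) :
    (Equiv.swap a b x = a ∨ Equiv.swap a b x = b) ↔ (x = a ∨ x = b) := by
  constructor
  · rintro (h | h)
    · right
      have := congrArg (Equiv.swap a b) h
      simpa using this
    · left
      have := congrArg (Equiv.swap a b) h
      simpa using this
  · rintro (h | h) <;> subst h <;> simp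

lemma mvOn_proper {V : Type*} {H : SimpleGraph V} {k : ℕ} {T : Set V} {c c' : V → Fin k}
    (h : MvOn H k T c c') (hp : PrOn H k T c) : PrOn H k T c' := by
  obtain ⟨a, b, S, hS, hc⟩ := h
  have key : ∀ x ∈ T, ∀ y ∈ T, H.Adj x y → x ∈ S → y ∉ S → Equiv.swap a b (c x) ≠ c y := by
    intro x hx y hy hxy hxS hyS
    by_cases h1 : c x = a ∨ c x = b
    · have h2 : ¬ (c y = a ∨ c y = b) := fun h2 => hyS (hS x hx y hy hxy h1 h2 hxS)
      intro h3
      rw [← h3, swap_mem] at h2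
      exact h2 h1
    · push Not at h1
      rw [Equiv.swap_apply_of_ne_of_ne h1.1 h1.2]
      exact hp x hx y hy hxy
  intro x hx y hy hxy
  rw [hc x hx, hc y hy]
  split_ifs with h1 h2 h2
  · intro h; exact hp x hx y hy hxy ((Equiv.swap a b).injective h)
  · exact key x hx y hy hxy h1 h2
  · exact (key y hy x hx hxy.symm h2 h1).symm
  · exact hp x hx y hy hxy

lemma mvOn_symm {V : Type*} {H : SimpleGraph V} {k : ℕ} {c c' : V → Fin k}
    (h : MvOn H k Set.univ c c') : MvOn H k Set.univ c' c := by
  obtain ⟨a, b, S, hS, hc⟩ := h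
  have hm : ∀ x, (c' x = a ∨ c' x = b) ↔ (c x = a ∨ c x = b) := by
    intro x
    rw [hc x trivial]
    split_ifs
    · exact swap_mem a b (c x)
    · rfl
  refine ⟨a, b, S, ?_, ?_⟩
  · intro x hx y hy hxy h1 h2
    exact hS x hx y hy hxy ((hm x).1 h1) ((hm y).1 h2)
  · intro v hv
    rw [hc v hv]
    split_ifs <;> simp

lemma mvOn_recolor {V : Type*} {H : SimpleGraph V} {k : ℕ} {T : Set V} {c : V → Fin k}
    (hp : PrOn H k T c) (w : V) (j : Fin k) (hj : ∀ y ∈ T, H.Adj w y → c y ≠ j) (hw : w ∈ T) :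
    MvOn H k T c (Function.update c w j) := by
  refine ⟨c w, j, {w}, ?_, ?_⟩
  · intro x hx y hy hxy h1 h2 hxw
    rw [Set.mem_singleton_iff] at hxw
    subst hxw
    rcases h2 with h2 | h2
    · exact absurd h2.symm (hp x hx y hy hxy)
    · exact absurd h2 (hj y hy hxy)
  · intro v _
    by_cases h : v = w
    · subst h; simp
    · simp [h]

lemma exists_color {k : ℕ} (s : Finset (Fin k)) (h : s.card < k) : ∃ j, j ∉ s := by
  by_contra hcon
  push Not at hcon
  have : s = Finset.univ := Finset.eq_univ_iff_forall.2 hcon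
  rw [this] at h
  simp at h

lemma lift_step {V : Type*} [Fintype V] {H : SimpleGraph V} {k : ℕ} {T : Set V} {w : V}
    (hw : w ∉ T) (hdeg : (Finset.univ.filter (fun y => y ∈ T ∧ H.Adj w y)).card < k)
    {c c' : V → Fin k} (hm : MvOn H k T c c') (hp : PrOn H k (insert w T) c) :
    ∃ e, (∀ v ∈ T, e v = c' v) ∧ PrOn H k (insert w T) e ∧
      Relation.ReflTransGen (MvOn H k (insert w T)) c e := by
  obtain ⟨a, b, S, hS, hc⟩ := hm
  have step1 : ∃ c1, (∀ v ∈ T, c1 v = c v) ∧ PrOn H k (insert w T) c1 ∧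
      Relation.ReflTransGen (MvOn H k (insert w T)) c c1 ∧
      ((¬ (c1 w = a ∨ c1 w = b)) ∨
        ∀ y ∈ T, ∀ z ∈ T, H.Adj w y → H.Adj w z → (c1 y = a ∨ c1 y = b) → (c1 z = a ∨ c1 z = b)
          → y = z) := by
    by_cases h1 : (¬ (c w = a ∨ c w = b)) ∨
        ∀ y ∈ T, ∀ z ∈ T, H.Adj w y → H.Adj w z → (c y = a ∨ c y = b) → (c z = a ∨ c z = b)
          → y = z
    · exact ⟨c, fun _ _ => rfl, hp, .refl, h1⟩
    · push Not at h1
      obtain ⟨hcw, y, hy, z, hz, hwy, hwz, hcy, hcz, hyz⟩ := h1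
      have hyw := hp w (by simp) y (by simp [hy]) hwy
      have hzw := hp w (by simp) z (by simp [hz]) hwz
      have hyzc : c z = c y := by
        rcases hcw with h | h <;> rcases hcy with h' | h' <;> rcases hcz with h'' | h'' <;>
          simp_all
      set N := Finset.univ.filter (fun y => y ∈ T ∧ H.Adj w y) with hN
      have hzN : z ∈ N := by simp [hN, hz, hwz]
      have hyN : y ∈ N.erase z := by simp [hN, hy, hwy, hyz]
      obtain ⟨j, hj⟩ := exists_color (insert (c w) ((N.erase z).image c)) (by
        have h1 := Finset.card_insert_le (c w) ((N.erase z).image c)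
        have h2 : ((N.erase z).image c).card ≤ (N.erase z).card := Finset.card_image_le
        have h3 := Finset.card_erase_of_mem hzN
        have h4 : 0 < N.card := Finset.card_pos.2 ⟨z, hzN⟩
        omega)
      simp only [Finset.mem_insert, Finset.mem_image, not_or, not_exists, not_and] at hj
      have hjy : c y ≠ j := hj.2 y hyN
      have hjall : ∀ x ∈ insert w T, H.Adj w x → c x ≠ j := by
        intro x hx hwx
        have hxT : x ∈ T := by
          rcases hx with hx | hx
          · subst hx; exact absurd hwx (H.irrefl)
          · exact hx
        by_cases hxz : x = z
        · subst hxz; rw [hyzc]; exact hjy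
        · exact hj.2 x (by simp [hN, hxz, hxT, hwx])
      have hmv := mvOn_recolor hp w j hjall (by simp)
      refine ⟨Function.update c w j, ?_, mvOn_proper hmv hp, .single hmv, ?_⟩
      · intro v hv
        have : v ≠ w := fun h => hw (h ▸ hv)
        simp [this]
      · left
        simp only [Function.update_self]
        have hj1 := hj.1
        rintro (h | h) <;> subst h
        · rcases hcw with h | h <;> rcases hcy with h' | h' <;> simp_all
        · rcases hcw with h | h <;> rcases hcy with h' | h' <;> simp_all
  obtain ⟨c1, hc1, hp1, hr1, hcase⟩ := step1
  have hwT : ∀ v ∈ T, v ≠ w := fun v hv h => hw (h ▸ hv)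
  let S1 : Set V := {x | (x ∈ T ∧ x ∈ S) ∨
    (x = w ∧ ∃ y ∈ T, y ∈ S ∧ H.Adj w y ∧ (c y = a ∨ c y = b))}
  have hS1T : ∀ v ∈ T, (v ∈ S1 ↔ v ∈ S) := by
    intro v hv
    have := hwT v hv
    simp only [S1, Set.mem_ofPred_eq]
    tauto
  have hmv : MvOn H k (insert w T) c1
      (fun v => if v ∈ S1 then Equiv.swap a b (c1 v) else c1 v) := by
    refine ⟨a, b, S1, ?_, fun v _ => by by_cases hv : v ∈ S1 <;> simp [hv]⟩
    intro x hx y hy hxy h1 h2 hxS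
    rcases hx with hx | hx
    · subst hx
      rcases hy with hy | hy
      · subst hy; exact absurd hxy H.irrefl
      · rcases hcase with hcase | hcase
        · exact absurd h1 hcase
        · rcases hxS with ⟨h, _⟩ | ⟨_, z, hz, hzS, hxz, hcz⟩
          · exact absurd h hw
          · have : y = z := hcase y hy z hz hxy hxz h2 (by rw [hc1 z hz]; exact hcz)
            subst this
            exact (hS1T y hz).2 hzS
    · rcases hy with hy | hy
      · subst hy
        right
        refine ⟨rfl, x, hx, (hS1T x hx).1 hxS, hxy.symm, ?_⟩
        rw [← hc1 x hx]; exact h1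
      · rw [hS1T y hy]
        rw [hS1T x hx] at hxS
        rw [hc1 x hx] at h1
        rw [hc1 y hy] at h2
        exact hS x hx y hy hxy h1 h2 hxS
  refine ⟨_, ?_, mvOn_proper hmv hp1, hr1.tail hmv⟩
  intro v hv
  simp only [hS1T v hv, hc1 v hv, hc v hv]

lemma mvOn_congr {V : Type*} {H : SimpleGraph V} {k : ℕ} {T : Set V} {c d e : V → Fin k}
    (hm : MvOn H k T c d) (h : ∀ v ∈ T, e v = c v) : MvOn H k T e d := by
  obtain ⟨a, b, S, hS, hc⟩ := hm
  refine ⟨a, b, S, ?_, ?_⟩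
  · intro x hx y hy
    rw [h x hx, h y hy]
    exact hS x hx y hy
  · intro v hv
    rw [h v hv]; exact hc v hv

def Deg {V : Type*} [Fintype V] (H : SimpleGraph V) (k : ℕ) : Prop :=
  ∀ T : Finset V, T.Nonempty → ∃ v ∈ T, (T.filter (fun y => H.Adj v y)).card < k

theorem lvm {V : Type*} [Fintype V] {H : SimpleGraph V} {k : ℕ} (hH : Deg H k) (n : ℕ) :
    ∀ T : Finset V, T.card = n → ∀ c d : V → Fin k, PrOn H k (T : Set V) c →
      PrOn H k (T : Set V) d → Relation.ReflTransGen (MvOn H k (T : Set V)) c d := by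
  induction n with
  | zero =>
    intro T hT c d hc hd
    have : T = ∅ := Finset.card_eq_zero.1 hT
    subst this
    rcases isEmpty_or_nonempty V with hV | ⟨⟨v⟩⟩
    · have : c = d := funext fun v => (hV.false v).elim
      subst this; exact .refl
    · exact .single ⟨c v, c v, ∅, by simp, by simp⟩
  | succ n ih =>
    intro T hT c d hc hd
    obtain ⟨w, hwT, hw⟩ := hH T (Finset.card_pos.1 (by omega))
    have hins : (T : Set V) = insert w ((T.erase w : Finset V) : Set V) := by
      rw [← Finset.coe_insert, Finset.insert_erase hwT]
    have hsub : ∀ v ∈ ((T.erase w : Finset V) : Set V), v ∈ (T : Set V) := by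
      intro v hv; exact Finset.mem_of_mem_erase hv
    have hIH := ih (T.erase w) (by rw [Finset.card_erase_of_mem hwT]; omega) c d
      (fun x hx y hy => hc x (hsub x hx) y (hsub y hy))
      (fun x hx y hy => hd x (hsub x hx) y (hsub y hy))
    have hw' : w ∉ ((T.erase w : Finset V) : Set V) := by simp
    have hdeg : (Finset.univ.filter
        (fun y => y ∈ ((T.erase w : Finset V) : Set V) ∧ H.Adj w y)).card < k := by
      refine lt_of_le_of_lt (Finset.card_le_card ?_) hw
      intro y hy
      simp only [Finset.mem_filter, Finset.mem_univ, true_and] at hy ⊢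
      exact ⟨Finset.mem_of_mem_erase hy.1, hy.2⟩
    have key : ∀ x, Relation.ReflTransGen (MvOn H k ((T.erase w : Finset V) : Set V)) c x →
        ∃ e, (∀ v ∈ ((T.erase w : Finset V) : Set V), e v = x v) ∧ PrOn H k (T : Set V) e ∧
          Relation.ReflTransGen (MvOn H k (T : Set V)) c e := by
      intro x hx
      induction hx with
      | refl => exact ⟨c, fun _ _ => rfl, hc, .refl⟩
      | tail _ hstep ih2 =>
        obtain ⟨e, he, hpe, hre⟩ := ih2
        rw [hins] at hpe hre ⊢
        obtain ⟨e', he', hpe', hre'⟩ := lift_step hw' (by convert hdeg) (mvOn_congr hstep he) hpe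
        exact ⟨e', he', hpe', hre.trans hre'⟩
    obtain ⟨e, he, hpe, hre⟩ := key d hIH
    have hfin : MvOn H k (T : Set V) e (Function.update e w (d w)) := by
      apply mvOn_recolor hpe
      · intro y hy hwy
        have hne : y ≠ w := by rintro rfl; exact H.irrefl hwy
        rw [he y (by simpa [hne] using hy)]
        exact (hd w hwT y hy hwy).symm
      · exact hwT
    refine hre.tail ?_
    obtain ⟨a, b, S, h1, h2⟩ := hfin
    refine ⟨a, b, S, h1, ?_⟩
    intro v hv
    rw [← h2 v hv]
    by_cases hvw : v = w
    · subst hvw; simp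
    · simp [hvw]
      exact (he v (by simpa [hvw] using hv)).symm

theorem deg_exists {V : Type*} [Fintype V] {H : SimpleGraph V} {k : ℕ} (hk : 0 < k)
    (hH : Deg H k) (n : ℕ) :
    ∀ T : Finset V, T.card = n → ∃ c : V → Fin k, PrOn H k (T : Set V) c := by
  induction n with
  | zero =>
    intro T hT
    have : T = ∅ := Finset.card_eq_zero.1 hT
    subst this
    exact ⟨fun _ => ⟨0, hk⟩, by simp [PrOn]⟩
  | succ n ih =>
    intro T hT
    obtain ⟨w, hwT, hw⟩ := hH T (Finset.card_pos.1 (by omega))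
    obtain ⟨c, hc⟩ := ih (T.erase w) (by rw [Finset.card_erase_of_mem hwT]; omega)
    obtain ⟨j, hj⟩ := exists_color ((T.filter (fun y => H.Adj w y)).image c)
      (lt_of_le_of_lt Finset.card_image_le hw)
    simp only [Finset.mem_image, Finset.mem_filter, not_exists, not_and, and_imp] at hj
    refine ⟨Function.update c w j, ?_⟩
    intro x hx y hy hxy
    by_cases hxw : x = w
    · subst hxw
      have hne : y ≠ x := hxy.ne'
      simp [hne]
      exact fun h => hj y hy hxy h.symm
    · by_cases hyw : y = w
      · subst hyw
        simp [hxw]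
        exact fun h => hj x hx hxy.symm h
      · simp [hxw, hyw]
        exact hc x (by simpa [hxw] using hx) y (by simpa [hyw] using hy) hxy

/-- Kempe step from generalized moves. -/
theorem mv_kempe {V : Type*} [Fintype V] {G : SimpleGraph V} {k : ℕ} (n : ℕ) :
    ∀ (c c' : V → Fin k) (a b : Fin k) (S : Set V),
    (∀ x y, G.Adj x y → (c x = a ∨ c x = b) → (c y = a ∨ c y = b) → x ∈ S → y ∈ S) →
    (∀ v, c' v = if v ∈ S then Equiv.swap a b (c v) else c v) →
    (Finset.univ.filter (fun v => v ∈ S ∧ (c v = a ∨ c v = b))).card = n →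
    KempeEquiv G k c c' := by
  induction n using Nat.strong_induction_on with
  | _ n ih =>
  intro c c' a b S hS hc hn
  by_cases hne : ∃ v0, v0 ∈ S ∧ (c v0 = a ∨ c v0 = b)
  · obtain ⟨v0, hv0, hcv0⟩ := hne
    let K : Set V := {v | ∃ h : c v = a ∨ c v = b,
      (G.induce {x : V | c x = a ∨ c x = b}).Reachable ⟨v0, hcv0⟩ ⟨v, h⟩}
    have hKS : ∀ v ∈ K, v ∈ S := by
      rintro v ⟨h, hr⟩
      obtain ⟨p⟩ := hr
      have : ∀ (x y : {x : V | c x = a ∨ c x = b})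
          (p : (G.induce {x : V | c x = a ∨ c x = b}).Walk x y), x.1 ∈ S → y.1 ∈ S := by
        intro x y p
        induction p with
        | nil => exact id
        | @cons u v w hadj _ ih => exact fun hx => ih (hS _ _ hadj u.2 v.2 hx)
      exact this _ _ p hv0
    let c1 : V → Fin k := fun v => if v ∈ K then Equiv.swap a b (c v) else c v
    have hstep : KempeStep G k c c1 := by
      refine ⟨a, b, ⟨v0, hcv0⟩, ?_⟩
      intro v
      by_cases h : c v = a ∨ c v = b
      · simp only [c1, h, K, Set.mem_ofPred_eq, exists_true_left, dite_true]
        congr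
      · simp only [c1, h, K, Set.mem_ofPred_eq, IsEmpty.exists_iff, dite_false, if_false]
    have hm : ∀ v, (c1 v = a ∨ c1 v = b) ↔ (c v = a ∨ c v = b) := by
      intro v
      simp only [c1]
      split_ifs
      · exact swap_mem a b (c v)
      · rfl
    have hv0K : v0 ∈ K := ⟨hcv0, SimpleGraph.Reachable.refl _⟩
    have hrest : KempeEquiv G k c1 c' := by
      refine ih _ ?_ c1 c' a b (S \ K) ?_ ?_ rfl
      · rw [← hn]
        apply Finset.card_lt_card
        refine ⟨?_, ?_⟩
        · intro v hv
          simp only [Finset.mem_filter, Finset.mem_univ, true_and, hm] at hv ⊢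
          exact ⟨hv.1.1, hv.2⟩
        · intro h
          have := h (show v0 ∈ _ by simp [hv0, hcv0])
          simp [hv0K] at this
      · intro x y hxy h1 h2 hx
        rw [hm] at h1 h2
        refine ⟨hS x y hxy h1 h2 hx.1, ?_⟩
        rintro ⟨h3, hr⟩
        apply hx.2
        refine ⟨h1, hr.trans ?_⟩
        apply SimpleGraph.Adj.reachable
        exact hxy.symm
      · intro v
        rw [hc v]
        simp only [c1, Set.mem_sdiff]
        by_cases h1 : v ∈ K
        · simp [h1, hKS v h1]
        · simp [h1]
    exact Relation.ReflTransGen.head hstep hrest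
  · push Not at hne
    have : c' = c := by
      funext v
      rw [hc v]
      split_ifs with h
      · exact Equiv.swap_apply_of_ne_of_ne (hne v h).1 (hne v h).2
      · rfl
    rw [this]
    exact Relation.ReflTransGen.refl

/-- The quotient graph along `π`. -/
def Qu {V : Type*} (G : SimpleGraph V) (π : V → V) : SimpleGraph V where
  Adj x y := x ≠ y ∧ ∃ x' y', G.Adj x' y' ∧ π x' = x ∧ π y' = y
  symm := ⟨by
    rintro x y ⟨h, x', y', h1, h2, h3⟩
    exact ⟨h.symm, y', x', h1.symm, h3, h2⟩⟩
  loopless := ⟨fun x h => h.1 rfl⟩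

lemma pull {V : Type*} {G : SimpleGraph V} {k : ℕ} {π : V → V}
    (hπ : ∀ x y, G.Adj x y → π x ≠ π y) {c c' : V → Fin k}
    (h : MvOn (Qu G π) k Set.univ c c') : MvOn G k Set.univ (c ∘ π) (c' ∘ π) := by
  obtain ⟨a, b, S, hS, hc⟩ := h
  refine ⟨a, b, π ⁻¹' S, ?_, ?_⟩
  · intro x _ y _ hxy h1 h2 hx
    exact hS (π x) trivial (π y) trivial ⟨hπ x y hxy, x, y, hxy, rfl, rfl⟩ h1 h2 hx
  · intro v _
    exact hc (π v) trivial

lemma qu_equiv {V : Type*} [Fintype V] {G : SimpleGraph V} {k : ℕ} {π : V → V}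
    (hπ : ∀ x y, G.Adj x y → π x ≠ π y) (hdeg : Deg (Qu G π) k) {c d : V → Fin k}
    (hc : IsProperColoring G k c) (hd : IsProperColoring G k d)
    (hcπ : ∀ x, c (π x) = c x) (hdπ : ∀ x, d (π x) = d x) :
    Relation.ReflTransGen (MvOn G k Set.univ) c d := by
  have hpr : ∀ c : V → Fin k, IsProperColoring G k c → (∀ x, c (π x) = c x) →
      PrOn (Qu G π) k ((Finset.univ : Finset V) : Set V) c := by
    rintro c hc hcπ x _ y _ ⟨_, x', y', h, rfl, rfl⟩
    rw [hcπ, hcπ]; exact hc h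
  have h := lvm hdeg _ Finset.univ rfl c d (hpr c hc hcπ) (hpr d hd hdπ)
  rw [Finset.coe_univ] at h
  have h2 := Relation.ReflTransGen.lift (p := MvOn G k Set.univ)
    (fun f : V → Fin k => f ∘ π) (fun x y hxy => pull hπ hxy) c d h
  have e1 : c ∘ π = c := funext hcπ
  have e2 : d ∘ π = d := funext hdπ
  simpa [e1, e2, Function.onFun] using h2

lemma qu_exists {V : Type*} [Fintype V] {G : SimpleGraph V} {k : ℕ} (hk : 0 < k) {π : V → V}
    (hπ : ∀ x y, G.Adj x y → π x ≠ π y) (hdeg : Deg (Qu G π) k) :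
    ∃ c : V → Fin k, IsProperColoring G k c ∧ ∀ x y, π x = π y → c x = c y := by
  obtain ⟨c, hc⟩ := deg_exists hk hdeg _ Finset.univ rfl
  refine ⟨c ∘ π, ?_, ?_⟩
  · intro x y hxy
    exact hc (π x) (by simp) (π y) (by simp) ⟨hπ x y hxy, x, y, hxy, rfl, rfl⟩
  · intro x y h
    simp [h]

end KC
namespace KC

structure Ctx {V : Type*} [Fintype V] (G : SimpleGraph V) (k : ℕ) : Prop where
  hk : 4 ≤ k
  reg : ∀ v, (Finset.univ.filter (fun y => G.Adj v y)).card = k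
  com : ∀ u v, u ≠ v → ¬ G.Adj u v → ∃ w, G.Adj u w ∧ G.Adj v w
  con : ∀ (p q : V) (T : Set V), (∃ x ∈ T, x ≠ p ∧ x ≠ q) → (∃ y, y ∉ T ∧ y ≠ p ∧ y ≠ q) →
    ∃ x ∈ T, ∃ y, y ∉ T ∧ x ≠ p ∧ x ≠ q ∧ y ≠ p ∧ y ≠ q ∧ G.Adj x y
  big : k + 2 ≤ Fintype.card V

section
variable {W : Type*} [Fintype W] {G : SimpleGraph W} {k : ℕ}

lemma q_sub {π : W → W} {v : W} (hv : ∀ x, π x = v → x = v) (T R : Finset W)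
    (hR : ∀ y', G.Adj v y' → π y' ∈ T → ∃ y'' ∈ R, π y'' = π y') :
    (T.filter (fun y => (Qu G π).Adj v y)).card ≤ R.card := by
  refine le_trans (Finset.card_le_card ?_) (Finset.card_image_le (f := π) (s := R))
  intro y hy
  simp only [Finset.mem_filter] at hy
  obtain ⟨hyT, _, x', y', hadj, hx', rfl⟩ := hy
  have := hv x' hx'
  subst this
  obtain ⟨y'', h1, h2⟩ := hR y' hadj hyT
  exact Finset.mem_image.2 ⟨y'', h1, h2⟩

lemma q_two (C : Ctx G k) {π : W → W} {v y z : W} (hv : ∀ x, π x = v → x = v) (T : Finset W)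
    (hy : G.Adj v y) (hz : G.Adj v z) (hyz : y ≠ z) (h : π y = π z) :
    (T.filter (fun y => (Qu G π).Adj v y)).card < k := by
  have hzN : z ∈ Finset.univ.filter (fun y => G.Adj v y) := by simp [hz]
  have h1 := q_sub (G := G) hv T ((Finset.univ.filter (fun y => G.Adj v y)).erase z) (by
    intro y' hy' _
    by_cases hz' : y' = z
    · subst hz'; exact ⟨y, by simp [hy, hyz], h⟩
    · exact ⟨y', by simp [hy', hz'], rfl⟩)
  rw [Finset.card_erase_of_mem hzN, C.reg] at h1
  have := C.hk
  omega

lemma q_out (C : Ctx G k) {π : W → W} {v y : W} (hv : ∀ x, π x = v → x = v) (T : Finset W)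
    (hy : G.Adj v y) (h : π y ∉ T) :
    (T.filter (fun y => (Qu G π).Adj v y)).card < k := by
  have hzN : y ∈ Finset.univ.filter (fun y => G.Adj v y) := by simp [hy]
  have h1 := q_sub (G := G) hv T ((Finset.univ.filter (fun y => G.Adj v y)).erase y) (by
    intro y' hy' hT
    by_cases hz' : y' = y
    · subst hz'; exact absurd hT h
    · exact ⟨y', by simp [hy', hz'], rfl⟩)
  rw [Finset.card_erase_of_mem hzN, C.reg] at h1
  have := C.hk
  omega

lemma q_iso (C : Ctx G k) {π : W → W} {v : W} (hv : ∀ x, π x ≠ v) (T : Finset W) :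
    (T.filter (fun y => (Qu G π).Adj v y)).card < k := by
  have : T.filter (fun y => (Qu G π).Adj v y) = ∅ := by
    apply Finset.filter_eq_empty_iff.2
    rintro y _ ⟨_, x', y', _, h, _⟩
    exact hv x' h
  rw [this]
  have := C.hk
  simp; omega

lemma q_small (C : Ctx G k) {π : W → W} {v : W} (T : Finset W) (hT : T.card < k) :
    (T.filter (fun y => (Qu G π).Adj v y)).card < k :=
  lt_of_le_of_lt (Finset.card_filter_le _ _) hT

lemma pair_deg (C : Ctx G k) {u v : W} (huv : u ≠ v) (hadj : ¬ G.Adj u v) :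
    Deg (Qu G (fun x => if x = v then u else x)) k := by
  intro T hT
  by_cases hvT : v ∈ T
  · refine ⟨v, hvT, q_iso C ?_ T⟩
    intro x
    split_ifs with h
    · exact huv
    · exact h
  have hfib : ∀ w : W, w ≠ u → ∀ x, (if x = v then u else x) = w → x = w := by
    intro w hw x
    split_ifs with h
    · intro h'; exact absurd h'.symm hw
    · exact id
  by_cases hx : ∃ x ∈ T, x ≠ u
  · by_cases hy : ∃ y, y ∉ T ∧ y ≠ u ∧ y ≠ v
    · obtain ⟨x, hxT, hxu⟩ := hx
      obtain ⟨x, hxT, y, hyT, hxu, hxv, hyu, hyv, hxy⟩ := C.con u v (T : Set W)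
        ⟨x, hxT, hxu, fun h => hvT (h ▸ hxT)⟩ (by simpa using hy)
      refine ⟨x, hxT, q_out C (hfib x hxu) T hxy ?_⟩
      simpa [hyv] using hyT
    · push Not at hy
      obtain ⟨w, hw1, hw2⟩ := C.com u v huv hadj
      have hwT : w ∈ T := by
        by_contra h
        exact hw2.ne (hy w h hw1.ne').symm
      refine ⟨w, hwT, q_two C (hfib w hw1.ne') T hw1.symm hw2.symm huv ?_⟩
      simp
  · push Not at hx
    obtain ⟨x, hxT⟩ := hT
    refine ⟨x, hxT, q_small C T ?_⟩
    have : T.card ≤ ({u} : Finset W).card := Finset.card_le_card (fun y hy => by simp [hx y hy])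
    have := C.hk
    simp at *
    omega

lemma pair_ne {u v : W} (hadj : ¬ G.Adj u v) : ∀ x y, G.Adj x y →
    (if x = v then u else x) ≠ (if y = v then u else y) := by
  intro x y hxy
  split_ifs with h1 h2 h2
  · subst h1; subst h2; exact absurd hxy G.irrefl
  · subst h1; rintro rfl; exact hadj hxy.symm
  · subst h2; rintro rfl; exact hadj hxy
  · exact hxy.ne

lemma pair_equiv (C : Ctx G k) {u v : W} (huv : u ≠ v) (hadj : ¬ G.Adj u v) {c d : W → Fin k}
    (hc : IsProperColoring G k c) (hd : IsProperColoring G k d) (hcu : c u = c v)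
    (hdu : d u = d v) : Relation.ReflTransGen (MvOn G k Set.univ) c d := by
  refine qu_equiv (pair_ne hadj) (pair_deg C huv hadj) hc hd ?_ ?_
  · intro x; split_ifs with h
    · subst h; exact hcu
    · rfl
  · intro x; split_ifs with h
    · subst h; exact hdu
    · rfl

lemma pair_exists (C : Ctx G k) {u v : W} (huv : u ≠ v) (hadj : ¬ G.Adj u v) :
    ∃ c : W → Fin k, IsProperColoring G k c ∧ c u = c v := by
  obtain ⟨c, h1, h2⟩ := qu_exists (by have := C.hk; omega) (pair_ne hadj) (pair_deg C huv hadj)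
  exact ⟨c, h1, h2 u v (by simp)⟩

lemma triple_core (C : Ctx G k) {q r p : W} (hqr : q ≠ r) (hqp : q ≠ p) (hrp : r ≠ p)
    (aqr : ¬ G.Adj q r) (aqp : ¬ G.Adj q p) (arp : ¬ G.Adj r p) (c0 : W → Fin k)
    (hc0 : IsProperColoring G k c0)
    (hsq : ∃ s, G.Adj q s ∧ c0 s = c0 p) (hsr : ∃ s, G.Adj r s ∧ c0 s = c0 p) :
    ∃ c : W → Fin k, IsProperColoring G k c ∧ c q = c r ∧ c q = c p := by
  have hk := C.hk
  have arq : ¬ G.Adj r q := fun h => aqr h.symm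
  have apq : ¬ G.Adj p q := fun h => aqp h.symm
  have apr : ¬ G.Adj p r := fun h => arp h.symm
  by_contra hno
  let π3 : W → W := fun x => if x = r ∨ x = p then q else x
  have hπ3 : ∀ x y, G.Adj x y → π3 x ≠ π3 y := by
    intro x y hxy
    simp only [π3]
    split_ifs with h1 h2 h2
    · rcases h1 with rfl | rfl <;> rcases h2 with rfl | rfl <;> simp_all
    · rcases h1 with rfl | rfl <;> rintro rfl <;> simp_all
    · rcases h2 with rfl | rfl <;> rintro rfl <;> simp_all
    · exact hxy.ne
  have hnd : ¬ Deg (Qu G π3) k := by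
    intro hdeg
    obtain ⟨c, h1, h2⟩ := qu_exists (by omega) hπ3 hdeg
    exact hno ⟨c, h1, h2 _ _ (by simp [π3]), h2 _ _ (by simp [π3])⟩
  unfold Deg at hnd
  push Not at hnd
  obtain ⟨T, hTne, hT⟩ := hnd
  have hrT : r ∉ T := fun h => absurd (q_iso (G := G) C (π := π3) (v := r) (by
    intro x; simp only [π3]; split_ifs with h
    · exact hqr
    · tauto) T) (not_lt.2 (hT r h))
  have hpT : p ∉ T := fun h => absurd (q_iso (G := G) C (π := π3) (v := p) (by
    intro x; simp only [π3]; split_ifs with h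
    · exact hqp
    · tauto) T) (not_lt.2 (hT p h))
  have hfib : ∀ w, w ≠ q → ∀ x, π3 x = w → x = w := by
    intro w hw x; simp only [π3]; split_ifs with h
    · intro h'; exact absurd h'.symm hw
    · exact id
  obtain ⟨D, hDdef⟩ : ∃ D : Finset W, ∀ x, x ∈ D ↔ x ∈ T ∧ x ≠ q :=
    ⟨T.erase q, fun x => by simp [and_comm]⟩
  have hqD : q ∉ D := by simp [hDdef]
  have hrD : r ∉ D := by simp [hDdef, hrT]
  have hpD : p ∉ D := by simp [hDdef, hpT]
  have hD2 : ∀ d ∈ D, ∀ y z, (y = q ∨ y = r ∨ y = p) → (z = q ∨ z = r ∨ z = p) →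
      G.Adj d y → G.Adj d z → y = z := by
    intro d hd y z hy hz hdy hdz
    by_contra hyz
    rw [hDdef] at hd
    refine absurd (q_two C (hfib d hd.2) T hdy hdz hyz ?_) (not_lt.2 (hT d hd.1))
    rcases hy with rfl | rfl | rfl <;> rcases hz with rfl | rfl | rfl <;> simp [π3]
  have hDc : ∀ d ∈ D, ∀ y, G.Adj d y → y ≠ q → y ≠ r → y ≠ p → y ∈ D := by
    intro d hd y hdy h1 h2 h3
    by_contra hyD
    rw [hDdef] at hd hyD
    refine absurd (q_out C (hfib d hd.2) T hdy ?_) (not_lt.2 (hT d hd.1))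
    simp only [π3, h2, h3, or_self, if_false]
    tauto
  have hDne : ∃ d, d ∈ D := by
    by_contra h
    push Not at h
    obtain ⟨x, hx⟩ := hTne
    refine absurd (q_small (G := G) C T ?_) (not_lt.2 (hT x hx))
    have : T.card ≤ ({q} : Finset W).card := Finset.card_le_card (fun y hy => by
      have := h y
      rw [hDdef] at this
      simp only [Finset.mem_singleton]
      tauto)
    simp at this
    omega
  obtain ⟨d0, hd0⟩ := hDne
  have hneD : ∀ d ∈ D, d ≠ q ∧ d ≠ r ∧ d ≠ p := fun d hd =>
    ⟨fun h => hqD (h ▸ hd), fun h => hrD (h ▸ hd), fun h => hpD (h ▸ hd)⟩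
  have hattq : ∃ d ∈ D, G.Adj d q := by
    obtain ⟨x, hx, y, hy, h1, h2, h3, h4, h5⟩ := C.con r p (D : Set W)
      ⟨d0, hd0, (hneD d0 hd0).2.1, (hneD d0 hd0).2.2⟩ ⟨q, hqD, hqr, hqp⟩
    refine ⟨x, hx, ?_⟩
    by_cases h : y = q
    · exact h ▸ h5
    · exact absurd (hDc x hx y h5 h h3 h4) hy
  have hattr : ∃ d ∈ D, G.Adj d r := by
    obtain ⟨x, hx, y, hy, h1, h2, h3, h4, h5⟩ := C.con q p (D : Set W)
      ⟨d0, hd0, (hneD d0 hd0).1, (hneD d0 hd0).2.2⟩ ⟨r, hrD, hqr.symm, hrp⟩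
    refine ⟨x, hx, ?_⟩
    by_cases h : y = r
    · exact h ▸ h5
    · exact absurd (hDc x hx y h5 h3 h h4) hy
  have hattp : ∃ d ∈ D, G.Adj d p := by
    obtain ⟨x, hx, y, hy, h1, h2, h3, h4, h5⟩ := C.con q r (D : Set W)
      ⟨d0, hd0, (hneD d0 hd0).1, (hneD d0 hd0).2.1⟩ ⟨p, hpD, hqp.symm, hrp.symm⟩
    refine ⟨x, hx, ?_⟩
    by_cases h : y = p
    · exact h ▸ h5
    · exact absurd (hDc x hx y h5 h3 h4 h) hy
  have hcomm : ∀ d ∈ D, ∀ e, e ∉ D → e ≠ q → e ≠ r → e ≠ p →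
      ∃ t, (t = q ∨ t = r ∨ t = p) ∧ G.Adj d t ∧ G.Adj e t := by
    intro d hd e he h1 h2 h3
    obtain ⟨w, hw1, hw2⟩ := C.com d e (fun h => he (h ▸ hd))
      (fun h => he (hDc d hd e h h1 h2 h3))
    refine ⟨w, ?_, hw1, hw2⟩
    by_contra hw
    push Not at hw
    exact he (hDc w (hDc d hd w hw1 hw.1 hw.2.1 hw.2.2) e hw2.symm h1 h2 h3)
  have hE : ∀ e, e ∉ D → e ≠ q → e ≠ r → e ≠ p → ∀ t, (t = q ∨ t = r ∨ t = p) → G.Adj e t := by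
    intro e he h1 h2 h3 t ht
    have : ∃ d ∈ D, G.Adj d t := by
      rcases ht with rfl | rfl | rfl
      exacts [hattq, hattr, hattp]
    obtain ⟨d, hd, hdt⟩ := this
    obtain ⟨t', ht', hdt', het'⟩ := hcomm d hd e he h1 h2 h3
    rw [hD2 d hd t t' ht ht' hdt hdt']
    exact het'
  obtain ⟨e0, he0q, he0r⟩ := C.com q r hqr aqr
  have he0p : e0 ≠ p := by rintro rfl; exact aqp he0q
  have he0D : e0 ∉ D := fun h =>
    hqr (hD2 e0 h q r (by simp) (by simp) he0q.symm he0r.symm)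
  let E : Finset W := Finset.univ.filter (fun e => e ∉ D ∧ e ≠ q ∧ e ≠ r ∧ e ≠ p)
  have he0E : e0 ∈ E := by
    simp only [E, Finset.mem_filter, Finset.mem_univ, true_and]
    exact ⟨he0D, he0q.ne', he0r.ne', he0p⟩
  have hEcard : k ≤ E.card + 2 := by
    have h1 : Finset.univ.filter (fun y => G.Adj e0 y) ⊆ E.erase e0 ∪ {q, r, p} := by
      intro y hy
      simp only [Finset.mem_filter, Finset.mem_univ, true_and] at hy
      by_cases hyt : y = q ∨ y = r ∨ y = p
      · simp; tauto
      · push Not at hyt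
        have : y ∉ D := fun h => he0D (hDc y h e0 hy.symm he0q.ne' he0r.ne' he0p)
        have hne : y ≠ e0 := hy.ne'
        simp [E, hyt, this, hne]
    have h2 := Finset.card_le_card h1
    rw [C.reg] at h2
    have h3 := Finset.card_union_le (E.erase e0) {q, r, p}
    have h4 : ({q, r, p} : Finset W).card ≤ 3 := Finset.card_le_three
    have h5 := Finset.card_erase_of_mem he0E
    have h6 : 0 < E.card := Finset.card_pos.2 ⟨_, he0E⟩
    omega
  have hDt : ∀ t, (t = q ∨ t = r ∨ t = p) → (D.filter (fun d => G.Adj t d)).card ≤ 2 := by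
    intro t ht
    have hdis : Disjoint E (D.filter (fun d => G.Adj t d)) := by
      rw [Finset.disjoint_left]
      intro x hx hx'
      simp only [E, Finset.mem_filter] at hx hx'
      exact hx.2.1 hx'.1
    have h1 : E ∪ D.filter (fun d => G.Adj t d) ⊆ Finset.univ.filter (fun y => G.Adj t y) := by
      intro x hx
      simp only [Finset.mem_union, Finset.mem_filter, E, Finset.mem_univ, true_and] at hx ⊢
      rcases hx with hx | hx
      · exact (hE x hx.1 hx.2.1 hx.2.2.1 hx.2.2.2 t ht).symm
      · exact hx.2
    have h2 := Finset.card_le_card h1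
    rw [C.reg, Finset.card_union_of_disjoint hdis] at h2
    omega
  have hDcard : D.card ≤ 6 := by
    have h1 : D ⊆ D.filter (fun d => G.Adj q d) ∪ D.filter (fun d => G.Adj r d) ∪
        D.filter (fun d => G.Adj p d) := by
      intro d hd
      obtain ⟨t, ht, hdt, _⟩ := hcomm d hd e0 he0D he0q.ne' he0r.ne' he0p
      simp only [Finset.mem_union, Finset.mem_filter, hd, true_and]
      rcases ht with rfl | rfl | rfl <;> simp [hdt.symm]
    have h2 := Finset.card_le_card h1
    have h3 := Finset.card_union_le (D.filter (fun d => G.Adj q d) ∪ D.filter (fun d => G.Adj r d))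
      (D.filter (fun d => G.Adj p d))
    have h4 := Finset.card_union_le (D.filter (fun d => G.Adj q d)) (D.filter (fun d => G.Adj r d))
    have h5 := hDt q (by simp)
    have h6 := hDt r (by simp)
    have h7 := hDt p (by simp)
    omega
  have hDdeg : ∀ d ∈ D, k ≤ (D.filter (fun y => G.Adj d y)).card + 1 := by
    intro d hd
    obtain ⟨t, ht, hdt, _⟩ := hcomm d hd e0 he0D he0q.ne' he0r.ne' he0p
    have h1 : Finset.univ.filter (fun y => G.Adj d y) ⊆ insert t (D.filter (fun y => G.Adj d y)) := by
      intro y hy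
      simp only [Finset.mem_filter, Finset.mem_univ, true_and] at hy
      by_cases hyt : y = q ∨ y = r ∨ y = p
      · simp [hD2 d hd y t hyt ht hy hdt]
      · push Not at hyt
        simp [hDc d hd y hy hyt.1 hyt.2.1 hyt.2.2, hy]
    have h2 := Finset.card_le_card h1
    rw [C.reg] at h2
    exact h2.trans (Finset.card_insert_le _ _)
  obtain ⟨s, hqs, hcs⟩ := hsq
  obtain ⟨s', hrs', hcs'⟩ := hsr
  have hsD : s ∈ D := by
    by_contra h
    have h1 : s ≠ r := by rintro rfl; exact aqr hqs
    have h2 : s ≠ p := by rintro rfl; exact aqp hqs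
    exact hc0 (hE s h hqs.ne' h1 h2 p (by simp)) hcs
  have hsD' : s' ∈ D := by
    by_contra h
    have h1 : s' ≠ q := by rintro rfl; exact arq hrs'
    have h2 : s' ≠ p := by rintro rfl; exact arp hrs'
    exact hc0 (hE s' h h1 hrs'.ne' h2 p (by simp)) hcs'
  have hss : s ≠ s' := by
    rintro rfl
    exact hqr (hD2 s hsD q r (by simp) (by simp) hqs.symm hrs'.symm)
  have ass : ¬ G.Adj s s' := fun h => hc0 h (hcs.trans hcs'.symm)
  have hs3 := hneD s hsD
  have hs3' := hneD s' hsD'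
  let π2 : W → W := fun x => if x = s' then s else π3 x
  have hpiS : ∀ x, π3 x = s ↔ x = s := by
    intro x
    refine ⟨hfib s hs3.1 x, ?_⟩
    rintro rfl
    simp [π3, hs3.2.1, hs3.2.2]
  have hπ2 : ∀ x y, G.Adj x y → π2 x ≠ π2 y := by
    intro x y hxy
    simp only [π2]
    split_ifs with h1 h2 h2
    · subst h1; subst h2; exact absurd hxy G.irrefl
    · subst h1; intro h; rw [eq_comm, hpiS] at h; subst h; exact ass hxy.symm
    · subst h2; intro h; rw [hpiS] at h; subst h; exact ass hxy
    · exact hπ3 x y hxy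
  have hpiQ : π2 q = q := by simp [π2, π3, hs3'.1.symm]
  have hpiR : π2 r = q := by simp [π2, π3, hs3'.2.1.symm]
  have hpiP : π2 p = q := by simp [π2, π3, hs3'.2.2.symm]
  have hnd2 : ¬ Deg (Qu G π2) k := by
    intro hdeg
    obtain ⟨c, h1, h2⟩ := qu_exists (by omega) hπ2 hdeg
    exact hno ⟨c, h1, h2 _ _ (by rw [hpiQ, hpiR]), h2 _ _ (by rw [hpiQ, hpiP])⟩
  unfold Deg at hnd2
  push Not at hnd2
  obtain ⟨T2, hT2ne, hT2⟩ := hnd2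
  have hfib2 : ∀ w, w ≠ q → w ≠ s → ∀ x, π2 x = w → x = w := by
    intro w hw hws x; simp only [π2]; split_ifs with h
    · intro h'; exact absurd h'.symm hws
    · exact hfib w hw x
  have hpjR : ∀ x, π3 x ≠ r := by
    intro x; simp only [π3]; split_ifs with h
    · exact hqr
    · tauto
  have hpjP : ∀ x, π3 x ≠ p := by
    intro x; simp only [π3]; split_ifs with h
    · exact hqp
    · tauto
  have hrT2 : r ∉ T2 := fun h => absurd (q_iso (G := G) C (π := π2) (v := r) (by
    intro x; simp only [π2]; split_ifs with h
    · exact hs3.2.1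
    · exact hpjR x) T2) (not_lt.2 (hT2 r h))
  have hpT2 : p ∉ T2 := fun h => absurd (q_iso (G := G) C (π := π2) (v := p) (by
    intro x; simp only [π2]; split_ifs with h
    · exact hs3.2.2
    · exact hpjP x) T2) (not_lt.2 (hT2 p h))
  have hsT2 : s' ∉ T2 := fun h => absurd (q_iso (G := G) C (π := π2) (v := s') (by
    intro x; simp only [π2]; split_ifs with h
    · exact hss
    · intro h'; exact h (hfib s' hs3'.1 x h')) T2) (not_lt.2 (hT2 s' h))
  have hclaim : ∀ x ∈ T2, x ≠ q → x ≠ s → x ∈ D ∧ x ≠ s' ∧ ¬ (G.Adj x s ∧ G.Adj x s') ∧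
      ∀ y ∈ D, G.Adj x y → y ≠ s → y ≠ s' → y ∈ T2 := by
    intro x hx hxq hxs
    have hb := not_lt.2 (hT2 x hx)
    have hf := hfib2 x hxq hxs
    refine ⟨?_, fun h => hsT2 (h ▸ hx), ?_, ?_⟩
    · by_contra hxD
      have h2 : x ≠ r := fun h => hrT2 (h ▸ hx)
      have h3 : x ≠ p := fun h => hpT2 (h ▸ hx)
      exact hb (q_two C hf T2 (hE x hxD hxq h2 h3 q (by simp)) (hE x hxD hxq h2 h3 r (by simp)) hqr
        (by rw [hpiQ, hpiR]))
    · rintro ⟨h1, h2⟩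
      refine hb (q_two C hf T2 h1 h2 hss ?_)
      simp [π2, hss, (hpiS s).2 rfl]
    · intro y hy hxy hys hys'
      by_contra hyT
      refine hb (q_out C hf T2 hxy ?_)
      have := hneD y hy
      simpa [π2, π3, hys', this.2.1, this.2.2] using hyT
  have hex : ∃ x ∈ T2, x ≠ q ∧ x ≠ s := by
    by_contra h
    push Not at h
    obtain ⟨x, hx⟩ := hT2ne
    refine absurd (q_small (G := G) C T2 ?_) (not_lt.2 (hT2 x hx))
    have h1 : T2.card ≤ ({q, s} : Finset W).card := Finset.card_le_card (fun y hy => by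
      have := h y hy
      simp only [Finset.mem_singleton, Finset.mem_insert]
      tauto)
    have h2 : ({q, s} : Finset W).card ≤ 2 := Finset.card_le_two
    omega
  obtain ⟨x, hx, hxq, hxs⟩ := hex
  obtain ⟨hxD, hxs', hxa, hxc⟩ := hclaim x hx hxq hxs
  let D' : Finset W := (D.erase s).erase s'
  have hD' : D'.card ≤ 4 := by
    have h1 : ((D.erase s).erase s').card = (D.erase s).card - 1 :=
      Finset.card_erase_of_mem (by simp [hss.symm, hsD'])
    have h2 := Finset.card_erase_of_mem hsD
    simp only [D']
    omega
  have hnon : ∀ t ∈ D, ¬ G.Adj t s → ¬ G.Adj t s' →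
      (D'.filter (fun y => ¬ G.Adj t y)).card ≤ 1 := by
    intro t ht h1 h2
    have h3 := Finset.card_filter_add_card_filter_not (s := D') (fun y => G.Adj t y)
    have h4 : D.filter (fun y => G.Adj t y) ⊆ D'.filter (fun y => G.Adj t y) := by
      intro y hy
      simp only [Finset.mem_filter, D', Finset.mem_erase] at hy ⊢
      refine ⟨⟨?_, ?_, hy.1⟩, hy.2⟩
      · rintro rfl; exact h2 hy.2
      · rintro rfl; exact h1 hy.2
    have h5 := Finset.card_le_card h4
    have h6 := hDdeg t ht
    omega
  have hn1 := hnon s hsD G.irrefl ass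
  have hn2 := hnon s' hsD' (fun h => ass h.symm) G.irrefl
  let Z : Finset W := D'.filter (fun y => y ∈ T2)
  have hZle : Z.card ≤ 2 := by
    have h1 : Z ⊆ D'.filter (fun y => ¬ G.Adj s y) ∪ D'.filter (fun y => ¬ G.Adj s' y) := by
      intro y hy
      simp only [Z, D', Finset.mem_filter, Finset.mem_erase, Finset.mem_union] at hy ⊢
      have hyD := hy.1.2.2
      have := (hclaim y hy.2 (hneD y hyD).1 hy.1.2.1).2.2.1
      rw [G.adj_comm y s, G.adj_comm y s'] at this
      tauto
    have h2 := Finset.card_le_card h1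
    have h3 := Finset.card_union_le (D'.filter (fun y => ¬ G.Adj s y))
      (D'.filter (fun y => ¬ G.Adj s' y))
    omega
  have hxZ : x ∈ Z := by simp [Z, D', hxs, hxs', hxD, hx]
  have hZge : k ≤ Z.card + 1 := by
    have h6 := hDdeg x hxD
    obtain ⟨t, ht⟩ : ∃ t, D.filter (fun y => G.Adj x y) ⊆ insert t (Z.erase x) := by
      have hmem : ∀ y ∈ D, G.Adj x y → y ≠ s → y ≠ s' → y ∈ Z.erase x := by
        intro y hyD hxy h1 h2
        have h3 := hxc y hyD hxy h1 h2
        have h4 := hxy.ne'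
        simp [Z, D', h1, h2, h3, h4, hyD]
      by_cases hxas : G.Adj x s
      · refine ⟨s, ?_⟩
        intro y hy
        simp only [Finset.mem_filter] at hy
        by_cases h1 : y = s
        · simp [h1]
        · refine Finset.mem_insert_of_mem (hmem y hy.1 hy.2 h1 ?_)
          rintro rfl
          exact hxa ⟨hxas, hy.2⟩
      · refine ⟨s', ?_⟩
        intro y hy
        simp only [Finset.mem_filter] at hy
        by_cases h1 : y = s'
        · simp [h1]
        · refine Finset.mem_insert_of_mem (hmem y hy.1 hy.2 ?_ h1)
          rintro rfl
          exact hxas hy.2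
    have h7 := Finset.card_le_card ht
    have h8 := Finset.card_insert_le t (Z.erase x)
    have h9 := Finset.card_erase_of_mem hxZ
    have h10 : 0 < Z.card := Finset.card_pos.2 ⟨x, hxZ⟩
    omega
  omega

end
end KC
namespace KC

section
variable {W : Type*} [Fintype W] {G : SimpleGraph W} {k : ℕ}

def np {W : Type*} {k : ℕ} (P : (W → Fin k) → Prop) : (W → Fin k) → Prop := fun c => ¬ P c

lemma np_np {W : Type*} {k : ℕ} (P : (W → Fin k) → Prop) : np (np P) = P := by
  funext c; simp [np]

structure Inv {W : Type*} (G : SimpleGraph W) (k : ℕ) (P : (W → Fin k) → Prop) : Prop where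
  mv : ∀ x y, MvOn G k Set.univ x y → (P x ↔ P y)
  ex : ∃ c, IsProperColoring G k c ∧ P c
  exn : ∃ c, IsProperColoring G k c ∧ ¬ P c

lemma Inv.neg {W : Type*} {G : SimpleGraph W} {k : ℕ} {P : (W → Fin k) → Prop}
    (I : Inv G k P) : Inv G k (np P) where
  mv := fun x y h => not_congr (I.mv x y h)
  ex := I.exn
  exn := by simpa [np] using I.ex

def RE {W : Type*} (G : SimpleGraph W) {k : ℕ} (P : (W → Fin k) → Prop) (u v : W) : Prop :=
  u ≠ v ∧ ¬ G.Adj u v ∧ ∃ c, IsProperColoring G k c ∧ P c ∧ c u = c v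

variable {P : (W → Fin k) → Prop}

lemma RE.symm {W : Type*} {G : SimpleGraph W} {k : ℕ} {P : (W → Fin k) → Prop} {u v : W}
    (h : RE G P u v) : RE G P v u :=
  ⟨h.1.symm, fun h' => h.2.1 h'.symm, by
    obtain ⟨c, h1, h2, h3⟩ := h.2.2
    exact ⟨c, h1, h2, h3.symm⟩⟩

lemma inv_rtg (I : Inv G k P) {c d : W → Fin k}
    (h : Relation.ReflTransGen (MvOn G k Set.univ) c d) : P c ↔ P d := by
  induction h with
  | refl => rfl
  | tail _ h ih => exact ih.trans (I.mv _ _ h)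

lemma re_P (C : Ctx G k) (I : Inv G k P) {u v : W} (h : RE G P u v) {c : W → Fin k}
    (hc : IsProperColoring G k c) (huv : c u = c v) : P c := by
  obtain ⟨h1, h2, d, hd, hPd, hdu⟩ := h
  exact (inv_rtg I (pair_equiv C h1 h2 hd hc hdu huv)).1 hPd

lemma re_excl (C : Ctx G k) (I : Inv G k P) {u v : W} (h : RE G P u v) (h' : RE G (np P) u v) :
    False := by
  obtain ⟨_, _, d, hd, hPd, hdu⟩ := h'
  exact hPd (re_P C I h hd hdu)

lemma re_total (C : Ctx G k) (P : (W → Fin k) → Prop) {u v : W} (huv : u ≠ v)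
    (hadj : ¬ G.Adj u v) : RE G P u v ∨ RE G (np P) u v := by
  obtain ⟨c, hc, hcu⟩ := pair_exists C huv hadj
  by_cases h : P c
  · exact Or.inl ⟨huv, hadj, c, hc, h, hcu⟩
  · exact Or.inr ⟨huv, hadj, c, hc, h, hcu⟩

lemma pr_of {c : W → Fin k} (hc : IsProperColoring G k c) : PrOn G k Set.univ c :=
  fun _ _ _ _ h => hc h

lemma of_pr {c : W → Fin k} (hc : PrOn G k Set.univ c) : IsProperColoring G k c :=
  fun x y h => hc x trivial y trivial h

lemma recolor (I : Inv G k P) {c : W → Fin k} (hc : IsProperColoring G k c) (hP : P c) (v : W)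
    (j : Fin k) (hj : ∀ y, G.Adj v y → c y ≠ j) :
    IsProperColoring G k (Function.update c v j) ∧ P (Function.update c v j) := by
  have h := mvOn_recolor (pr_of hc) v j (fun y _ => hj y) trivial
  exact ⟨of_pr (mvOn_proper h (pr_of hc)), (I.mv _ _ h).1 hP⟩

lemma sees (C : Ctx G k) (I : Inv G k P) {c : W → Fin k} (hc : IsProperColoring G k c) (hP : P c)
    {v b : W} (h : RE G (np P) v b) : ∃ y, G.Adj v y ∧ c y = c b := by
  by_contra hno
  push Not at hno
  obtain ⟨h1, h2⟩ := recolor I hc hP v (c b) hno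
  exact re_P C I.neg h h1 (by simp [h.1.symm]) h2

lemma share (C : Ctx G k) (I : Inv G k P) {c : W → Fin k} (hc : IsProperColoring G k c) (hP : P c)
    {v b : W} (h : RE G (np P) v b) : ∃ y, y ≠ v ∧ G.Adj b y ∧ c y = c v := by
  obtain ⟨y, h1, h2⟩ := sees C I hc hP h.symm
  exact ⟨y, fun h' => h.2.1 (h' ▸ h1).symm, h1, h2⟩

lemma re_of {c : W → Fin k} (hc : IsProperColoring G k c) (hP : P c) {u v : W} (huv : u ≠ v)
    (h : c u = c v) : RE G P u v :=
  ⟨huv, fun h' => hc h' h, c, hc, hP, h⟩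

lemma mixed (C : Ctx G k) (I : Inv G k P) (v : W) : ∃ a, RE G P v a := by
  have hnon : ∃ b, b ≠ v ∧ ¬ G.Adj v b := by
    by_contra h
    push Not at h
    have h1 : (Finset.univ : Finset W) ⊆ insert v (Finset.univ.filter (fun y => G.Adj v y)) := by
      intro y _
      by_cases hy : y = v
      · simp [hy]
      · simp [h y hy]
    have h2 := Finset.card_le_card h1
    have h3 := Finset.card_insert_le v (Finset.univ.filter (fun y => G.Adj v y))
    rw [C.reg] at h3
    have h4 := C.big
    rw [Finset.card_univ] at h2
    omega
  obtain ⟨b, hb, hadj⟩ := hnon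
  rcases re_total C P hb.symm hadj with h | h
  · exact ⟨b, h⟩
  · obtain ⟨c, hc, hP⟩ := I.ex
    obtain ⟨y, hy, _, hcy⟩ := share C I hc hP h
    exact ⟨y, re_of hc hP hy.symm hcy.symm⟩

lemma partner (C : Ctx G k) (I : Inv G k P) {c : W → Fin k} (hc : IsProperColoring G k c) (v : W) :
    ∃ y, y ≠ v ∧ c y = c v := by
  by_cases hP : P c
  · obtain ⟨b, hb⟩ := mixed C I.neg v
    obtain ⟨y, hy, _, hcy⟩ := share C I hc hP hb
    exact ⟨y, hy, hcy⟩
  · obtain ⟨b, hb⟩ := mixed C I v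
    rw [← np_np P] at hb
    obtain ⟨y, hy, _, hcy⟩ := share C I.neg hc hP hb
    exact ⟨y, hy, hcy⟩

lemma class_ge (C : Ctx G k) (I : Inv G k P) {c : W → Fin k} (hc : IsProperColoring G k c)
    (j : Fin k) : 2 ≤ (Finset.univ.filter (fun v => c v = j)).card := by
  have hused : ∃ v, c v = j := by
    by_contra h
    push Not at h
    have : 0 < Fintype.card W := by have := C.big; omega
    obtain ⟨v⟩ := Fintype.card_pos_iff.1 this
    have hm := mvOn_recolor (pr_of hc) v j (fun y _ _ => h y) trivial
    obtain ⟨y, hy, hcy⟩ := partner C I (of_pr (mvOn_proper hm (pr_of hc))) v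
    simp [hy] at hcy
    exact h y hcy
  obtain ⟨v, hv⟩ := hused
  obtain ⟨y, hy, hcy⟩ := partner C I hc v
  exact Finset.one_lt_card.2 ⟨v, by simp [hv], y, by simp [hcy, hv], hy.symm⟩

lemma no_mixed_aux (C : Ctx G k) (I : Inv G k P) {q r p : W} (h1 : RE G P q r)
    (h2 : RE G (np P) q p) (h3 : RE G (np P) r p) : False := by
  obtain ⟨c, hc, hP, hcq⟩ := h1.2.2
  obtain ⟨d, hd, hd1, hd2⟩ := triple_core C h1.1 h2.1 h3.1 h1.2.1 h2.2.1 h3.2.1 c hc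
    (sees C I hc hP h2) (sees C I hc hP h3)
  exact re_P C I.neg h2 hd hd2 (re_P C I h1 hd hd1)

lemma no_mixed (C : Ctx G k) (I : Inv G k P) {u a b : W} (h1 : RE G P u a)
    (h2 : RE G (np P) u b) : G.Adj a b := by
  by_contra hab
  have hne : a ≠ b := by
    rintro rfl
    exact re_excl C I h1 h2
  rcases re_total C P hne hab with h | h
  · refine no_mixed_aux C I.neg (q := u) (r := b) (p := a) h2 ?_ ?_
    · rw [np_np]; exact h1
    · rw [np_np]; exact h.symm
  · exact no_mixed_aux C I h1 h2 h

lemma re_card (C : Ctx G k) (I : Inv G k P) (u : W) :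
    (Finset.univ.filter (fun a => RE G P u a)).card + 1 ≤ k := by
  obtain ⟨b, hb⟩ := mixed C I.neg u
  obtain ⟨w, hw1, hw2⟩ := C.com u b hb.1 hb.2.1
  have hwn : w ∉ Finset.univ.filter (fun a => RE G P u a) := by
    simp only [Finset.mem_filter, Finset.mem_univ, true_and]
    exact fun h => h.2.1 hw1
  have h1 : insert w (Finset.univ.filter (fun a => RE G P u a)) ⊆
      Finset.univ.filter (fun y => G.Adj b y) := by
    intro y hy
    simp only [Finset.mem_insert, Finset.mem_filter, Finset.mem_univ, true_and] at hy ⊢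
    rcases hy with rfl | hy
    · exact hw2
    · exact (no_mixed C I hy hb).symm
  have h2 := Finset.card_le_card h1
  rw [C.reg, Finset.card_insert_of_notMem hwn] at h2
  exact h2

lemma card_eq (C : Ctx G k) (P : (W → Fin k) → Prop) (u : W) :
    Fintype.card W ≤ 1 + k + (Finset.univ.filter (fun a => RE G P u a)).card +
      (Finset.univ.filter (fun a => RE G (np P) u a)).card := by
  have h1 : (Finset.univ : Finset W) ⊆ {u} ∪ Finset.univ.filter (fun y => G.Adj u y) ∪
      Finset.univ.filter (fun a => RE G P u a) ∪
      Finset.univ.filter (fun a => RE G (np P) u a) := by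
    intro y _
    simp only [Finset.mem_union, Finset.mem_singleton, Finset.mem_filter, Finset.mem_univ, true_and]
    by_cases hy : y = u
    · simp [hy]
    · by_cases ha : G.Adj u y
      · simp [ha]
      · have := re_total C P (Ne.symm hy) ha
        tauto
  have h2 := Finset.card_le_card h1
  have h3 := Finset.card_union_le ({u} ∪ Finset.univ.filter (fun y => G.Adj u y) ∪
      Finset.univ.filter (fun a => RE G P u a)) (Finset.univ.filter (fun a => RE G (np P) u a))
  have h4 := Finset.card_union_le ({u} ∪ Finset.univ.filter (fun y => G.Adj u y))
      (Finset.univ.filter (fun a => RE G P u a))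
  have h5 := Finset.card_union_le ({u} : Finset W) (Finset.univ.filter (fun y => G.Adj u y))
  rw [C.reg, Finset.card_singleton] at h5
  rw [Finset.card_univ] at h2
  omega

lemma swap_pair (C : Ctx G k) (I : Inv G k P) {c : W → Fin k} (hc : IsProperColoring G k c)
    (hP : P c) {u a b : W} (hcl : ∀ y, c y = c u → y = u ∨ y = a) (hca : c a = c u)
    (hb : RE G (np P) u b) : G.Adj a b ∧ ∃ b2, b2 ≠ b ∧ c b2 = c b ∧ G.Adj a b2 := by
  have hab : G.Adj a b := by
    obtain ⟨y, hy, hby, hcy⟩ := share C I hc hP hb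
    rcases hcl y hcy with h | h
    · exact absurd h hy
    · exact h ▸ hby.symm
  refine ⟨hab, ?_⟩
  by_contra hno
  push Not at hno
  have hcba := hc hab
  have hcab : ∀ y, c y = c u → y = u ∨ y = a := hcl
  have hm : MvOn G k Set.univ c
      (fun v => if v ∈ ({a, b} : Set W) then Equiv.swap (c a) (c b) (c v) else c v) := by
    refine ⟨c a, c b, {a, b}, ?_, fun v _ => by by_cases hv : v ∈ ({a, b} : Set W) <;> simp [hv]⟩
    intro x _ y _ hxy h1 h2 hx
    rcases hx with hx | hx
    · subst hx
      rcases h2 with h2 | h2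
      · exact absurd h2.symm (hc hxy)
      · right
        by_contra hyb
        exact hno y hyb h2 hxy
    · rw [Set.mem_singleton_iff] at hx
      subst hx
      rcases h2 with h2 | h2
      · rcases hcl y (h2.trans hca) with h | h
        · subst h; exact absurd hxy.symm hb.2.1
        · left; exact h
      · exact absurd h2.symm (hc hxy)
  have hP' := (I.mv _ _ hm).1 hP
  have hpr := of_pr (mvOn_proper hm (pr_of hc))
  have hua : u ≠ a := by
    rintro rfl
    exact hb.2.1 hab
  refine re_P C I.neg hb hpr ?_ hP'
  simp [hua, hb.1, hca]

lemma unique_blue (C : Ctx G k) (I : Inv G k P) {c : W → Fin k} (hc : IsProperColoring G k c)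
    (hP : P c) {u a : W} (hua : u ≠ a) (hcl : ∀ y, c y = c u → y = u ∨ y = a) (hca : c a = c u)
    {b b' : W} (hb : RE G (np P) u b) (hb' : RE G (np P) u b') : b = b' := by
  by_contra hne
  obtain ⟨hab, b2, hb2, hcb2, hab2⟩ := swap_pair C I hc hP hcl hca hb
  obtain ⟨hab', b2', hb2', hcb2', hab2'⟩ := swap_pair C I hc hP hcl hca hb'
  by_cases hcc : c b = c b'
  ·
    have h1 : RE G P b b' := re_of hc hP hne hcc
    have := no_mixed C I h1 hb.symm
    exact hb'.2.1 this.symm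
  · have hall : ∀ j, j ≠ c a → ∃ y, G.Adj a y ∧ c y = j := by
      intro j hj
      by_contra hno
      push Not at hno
      obtain ⟨h1, h2⟩ := recolor I hc hP a j hno
      obtain ⟨y, hy, hcy⟩ := partner C I h1 u
      rw [Function.update_of_ne hua] at hcy
      by_cases hya : y = a
      · subst hya
        rw [Function.update_self] at hcy
        exact hj (hcy.trans hca.symm)
      · rw [Function.update_of_ne hya] at hcy
        rcases hcl y hcy with h | h
        · exact hy h
        · exact hya h
    have hsub : Finset.univ.erase (c a) ⊆
        (((Finset.univ.filter (fun y => G.Adj a y)).erase b).erase b').image c := by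
      intro j hj
      obtain ⟨y, hy, hcy⟩ := hall j (Finset.ne_of_mem_erase hj)
      rw [Finset.mem_image]
      by_cases h1 : y = b
      · subst h1
        refine ⟨b2, ?_, hcb2.trans hcy⟩
        have : b2 ≠ b' := by rintro rfl; exact hcc hcb2.symm
        simp [this, hb2, hab2]
      · by_cases h2 : y = b'
        · subst h2
          refine ⟨b2', ?_, hcb2'.trans hcy⟩
          have : b2' ≠ b := by rintro rfl; exact hcc hcb2'
          simp [this, hb2', hab2']
        · exact ⟨y, by simp [h1, h2, hy], hcy⟩
    have h1 := (Finset.card_le_card hsub).trans Finset.card_image_le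
    rw [Finset.card_erase_of_mem (Finset.mem_univ _), Finset.card_univ, Fintype.card_fin,
      Finset.card_erase_of_mem (by simp [hab', Ne.symm hne]),
      Finset.card_erase_of_mem (by simp [hab]), C.reg] at h1
    have := C.hk
    omega

lemma sum_class (c : W → Fin k) :
    ∑ j : Fin k, (Finset.univ.filter (fun v => c v = j)).card = Fintype.card W := by
  rw [← Finset.card_univ]
  exact (Finset.card_eq_sum_card_fiberwise (f := c) (t := Finset.univ) (by simp)).symm

theorem no_inv (C : Ctx G k) (I : Inv G k P) : False := by
  have hk := C.hk
  obtain ⟨c, hc, hP⟩ := I.ex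
  have hV : 0 < Fintype.card W := by have := C.big; omega
  obtain ⟨v0⟩ := Fintype.card_pos_iff.1 hV
  have hn : Fintype.card W < 3 * k := by
    have h1 := card_eq C P v0
    have h2 := re_card C I v0
    have h3 := re_card C I.neg v0
    omega
  have hn2 : 2 * k ≤ Fintype.card W := by
    rw [← sum_class c]
    have := Finset.card_nsmul_le_sum (Finset.univ : Finset (Fin k))
      (fun j => (Finset.univ.filter (fun v => c v = j)).card) 2 (fun j _ => class_ge C I hc j)
    simp at this
    omega
  have hcls : ∃ j, (Finset.univ.filter (fun v => c v = j)).card = 2 := by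
    by_contra hno
    push Not at hno
    have := Finset.card_nsmul_le_sum (Finset.univ : Finset (Fin k))
      (fun j => (Finset.univ.filter (fun v => c v = j)).card) 3 (fun j _ => by
        have h1 := class_ge C I hc j
        have h2 := hno j
        show 3 ≤ (Finset.univ.filter (fun v => c v = j)).card
        omega)
    rw [sum_class c] at this
    simp at this
    omega
  obtain ⟨j, hj⟩ := hcls
  obtain ⟨u, a, hua, hset⟩ := Finset.card_eq_two.1 hj
  have hmem : ∀ y, c y = j ↔ y = u ∨ y = a := by
    intro y
    have : y ∈ Finset.univ.filter (fun v => c v = j) ↔ y ∈ ({u, a} : Finset W) := by rw [hset]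
    simpa using this
  have hcu : c u = j := (hmem u).2 (Or.inl rfl)
  have hca : c a = c u := ((hmem a).2 (Or.inr rfl)).trans hcu.symm
  have huB : ∀ b b', RE G (np P) u b → RE G (np P) u b' → b = b' := fun b b' hb hb' =>
    unique_blue C I hc hP hua (fun y hy => (hmem y).1 (hy.trans hcu)) hca hb hb'
  obtain ⟨b, hb⟩ := mixed C I.neg u
  obtain ⟨d, hd, hPd, hdu⟩ := hb.2.2
  have huA : ∀ x x', RE G P u x → RE G P u x' → x = x' := fun x x' hx hx' =>
    unique_blue C I.neg hd hPd hb.1 (fun y hy => by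
      by_cases hyu : y = u
      · exact Or.inl hyu
      · right
        exact huB _ _ (re_of hd hPd (Ne.symm hyu) hy.symm) hb) hdu.symm
      (by rw [np_np]; exact hx) (by rw [np_np]; exact hx')
  have h1 := card_eq C P u
  have h2 : (Finset.univ.filter (fun a => RE G P u a)).card ≤ 1 :=
    Finset.card_le_one.2 (fun x hx y hy => huA x y (by simpa using hx) (by simpa using hy))
  have h3 : (Finset.univ.filter (fun a => RE G (np P) u a)).card ≤ 1 :=
    Finset.card_le_one.2 (fun x hx y hy => huB x y (by simpa using hx) (by simpa using hy))
  omega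

end
end KC

/-- for `k ≥ 4`, a 3-connected `k`-regular graph of diameter 2 has all
its proper `k`-colourings in a single Kempe class. -/
theorem stmt13 {V : Type*} [Fintype V] (k : ℕ) (hk : 4 ≤ k) (G : SimpleGraph V)
    [DecidableRel G.Adj] (hreg : G.IsRegularOfDegree k) (h3c : ThreeConnected G)
    (hconn : G.Connected) (hle : ∀ u v : V, G.dist u v ≤ 2)
    (hex : ∃ u v : V, G.dist u v = 2) : KempeClass G k := by
  have hreg' : ∀ v, (Finset.univ.filter (fun y => G.Adj v y)).card = k := by
    intro v
    rw [← hreg v, ← SimpleGraph.card_neighborFinset_eq_degree]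
    congr 1
    ext y
    simp
  have hC : KC.Ctx G k := by
    refine ⟨hk, fun v => by convert hreg' v, ?_, ?_, ?_⟩
    · intro u v huv hadj
      obtain ⟨p, hp⟩ := hconn.exists_walk_length_eq_dist u v
      have h2 := hle u v
      rw [← hp] at h2
      match p, h2 with
      | .nil, _ => exact absurd rfl huv
      | .cons h .nil, _ => exact absurd h hadj
      | .cons h (.cons h' .nil), _ => exact ⟨_, h, h'.symm⟩
      | .cons _ (.cons _ (.cons _ _)), h2 => simp at h2
    · rintro p q T ⟨x, hx, hxp, hxq⟩ ⟨y, hy, hyp, hyq⟩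
      have hcon := h3c.2 {p, q} ((Set.ncard_insert_le p {q}).trans (by simp))
      obtain ⟨w⟩ := hcon.preconnected ⟨x, by simp [hxp, hxq]⟩ ⟨y, by simp [hyp, hyq]⟩
      have key : ∀ (s t : (({p, q} : Set V)ᶜ : Set V))
          (w : (G.induce ({p, q} : Set V)ᶜ).Walk s t), s.1 ∈ T → t.1 ∉ T →
          ∃ x ∈ T, ∃ y, y ∉ T ∧ x ≠ p ∧ x ≠ q ∧ y ≠ p ∧ y ≠ q ∧ G.Adj x y := by
        intro s t w
        induction w with
        | nil => exact fun h h' => absurd h h'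
        | @cons a b c hadj _ ih =>
          intro ha hc
          by_cases hb : b.1 ∈ T
          · exact ih hb hc
          · have h1 := a.2
            have h2 := b.2
            simp only [Set.mem_compl_iff, Set.mem_insert_iff, Set.mem_singleton_iff, not_or] at h1 h2
            exact ⟨a.1, ha, b.1, hb, h1.1, h1.2, h2.1, h2.2, hadj⟩
      exact key _ _ w hx hy
    · obtain ⟨u, v, huv⟩ := hex
      have hne : u ≠ v := by rintro rfl; simp at huv
      have hadj : ¬ G.Adj u v := by
        intro h
        rw [SimpleGraph.dist_eq_one_iff_adj.2 h] at huv
        omega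
      have h1 : insert v (insert u (Finset.univ.filter (fun y => G.Adj u y))) ⊆ Finset.univ :=
        Finset.subset_univ _
      have h2 := Finset.card_le_card h1
      rw [Finset.card_insert_of_notMem (by simp [hne.symm, hadj]),
        Finset.card_insert_of_notMem (by simp), hreg', Finset.card_univ] at h2
      omega
  intro c d hc hd
  by_contra hno
  have hmk : ∀ x y, KC.MvOn G k Set.univ x y → KempeEquiv G k x y := by
    rintro x y ⟨a, b, S, h1, h2⟩
    exact KC.mv_kempe _ x y a b S (fun x y => h1 x trivial y trivial)
      (fun v => by rw [h2 v trivial]) rfl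
  refine KC.no_inv (P := fun x => KempeEquiv G k c x) hC ⟨?_, ?_, ?_⟩
  · intro x y hxy
    exact ⟨fun h => h.trans (hmk x y hxy), fun h => h.trans (hmk y x (KC.mvOn_symm hxy))⟩
  · exact ⟨c, hc, Relation.ReflTransGen.refl⟩
  · exact ⟨d, hd, hno⟩
end
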